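/- arXiv:math/0511730 — 4 statements merged into one kernel-verified Lean document; each statement's English description precedes it below -/
import Mathlib

section
/- The monoid T is finite and its cardinality equals Σ_{k=0}^{⌊n/2⌋} (n!)² / (2^{2k}·(k!)²·(n−2k)!) (each quotient being an exact natural-number division). (This is the cardinality form of the theorem that T is isomorphic to the Brauer monoid 𝔅_n via σ_i ↦ s_i, θ_i ↦ π_i.) -/
/-!
The Brauer monoid presentation from Kudryavtseva–Mazorchuk,
"On presentations of Brauer-type monoids", Section 3.

Generators: `Sum.inl i` represents `σ_{i+1}` and `Sum.inr i` represents `θ_{i+1}`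
for `i : Fin (n-1)` (so the paper's indices `1, …, n-1` correspond to `i.val + 1`).
-/

/-- Generator type: `Sum.inl i` is `σ_{i+1}`, `Sum.inr i` is `θ_{i+1}`. -/
abbrev BrauerGen (n : ℕ) := Fin (n - 1) ⊕ Fin (n - 1)

/-- The word `σ_{i+1}` in the free monoid. -/
def fσ {n : ℕ} (i : Fin (n - 1)) : FreeMonoid (BrauerGen n) := FreeMonoid.of (Sum.inl i)

/-- The word `θ_{i+1}` in the free monoid. -/
def fθ {n : ℕ} (i : Fin (n - 1)) : FreeMonoid (BrauerGen n) := FreeMonoid.of (Sum.inr i)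

/-- The defining relations of the presentation of the Brauer monoid `𝔅_n`. -/
inductive BrauerRel (n : ℕ) : FreeMonoid (BrauerGen n) → FreeMonoid (BrauerGen n) → Prop
  | sigma_sq (i) : BrauerRel n (fσ i * fσ i) 1
  | sigma_comm (i j) (h : 1 < Nat.dist i.1 j.1) : BrauerRel n (fσ i * fσ j) (fσ j * fσ i)
  | braid (i j) (h : Nat.dist i.1 j.1 = 1) :
      BrauerRel n (fσ i * fσ j * fσ i) (fσ j * fσ i * fσ j)
  | theta_idem (i) : BrauerRel n (fθ i * fθ i) (fθ i)
  | theta_comm (i j) (h : 1 < Nat.dist i.1 j.1) : BrauerRel n (fθ i * fθ j) (fθ j * fθ i)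
  | theta_theta_theta (i j) (h : Nat.dist i.1 j.1 = 1) :
      BrauerRel n (fθ i * fθ j * fθ i) (fθ i)
  | theta_sigma (i) : BrauerRel n (fθ i * fσ i) (fθ i)
  | sigma_theta (i) : BrauerRel n (fσ i * fθ i) (fθ i)
  | theta_sigma_comm (i j) (h : 1 < Nat.dist i.1 j.1) :
      BrauerRel n (fθ i * fσ j) (fσ j * fθ i)
  | sigma_theta_theta (i j) (h : Nat.dist i.1 j.1 = 1) :
      BrauerRel n (fσ i * fθ j * fθ i) (fσ j * fθ i)
  | theta_theta_sigma (i j) (h : Nat.dist i.1 j.1 = 1) :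
      BrauerRel n (fθ i * fθ j * fσ i) (fθ i * fσ j)

/-- The monoid `T` given by the presentation above. -/
abbrev BrauerMonoid (n : ℕ) := PresentedMonoid (BrauerRel n)

/-- The generator `σ_{i+1}` of `T`. -/
def σB {n : ℕ} (i : Fin (n - 1)) : BrauerMonoid n := PresentedMonoid.of (BrauerRel n) (Sum.inl i)

/-- The generator `θ_{i+1}` of `T`. -/
def θB {n : ℕ} (i : Fin (n - 1)) : BrauerMonoid n := PresentedMonoid.of (BrauerRel n) (Sum.inr i)

/-- The point `i` of `{1, …, n}` (0-based: `i.val`). -/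
def lo {n : ℕ} (i : Fin (n - 1)) : Fin n := ⟨i.1, by have := i.2; omega⟩

/-- The point `i + 1` of `{1, …, n}` (0-based: `i.val + 1`). -/
def hi {n : ℕ} (i : Fin (n - 1)) : Fin n := ⟨i.1 + 1, by have := i.2; omega⟩

/-- The adjacent transposition `s_{i+1} = (i+1, i+2)` of the symmetric group on `{1, …, n}`. -/
def sPerm {n : ℕ} (i : Fin (n - 1)) : Equiv.Perm (Fin n) := Equiv.swap (lo i) (hi i)

namespace BrAux

/-! Part A: Coxeter presentation of the symmetric group -/
section Cox
variable {C : Type*} [Monoid C]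

def cc (σ : ℕ → C) (m j : ℕ) : C := ((List.range' j (m + 1 - j)).map σ).prod

theorem cc_top (σ : ℕ → C) (m : ℕ) : cc σ m (m + 1) = 1 := by simp [cc]

theorem cc_step (σ : ℕ → C) {m j : ℕ} (h : j ≤ m) : cc σ m j = σ j * cc σ m (j + 1) := by
  have : m + 1 - j = (m + 1 - (j + 1)) + 1 := by omega
  rw [cc, this, List.range'_succ]
  simp [cc]

structure CoxRel (σ : ℕ → C) (M : ℕ) : Prop where
  sq : ∀ i, i < M → σ i * σ i = 1
  comm : ∀ i j, i + 1 < j → j < M → σ i * σ j = σ j * σ i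
  braid : ∀ i, i + 1 < M → σ i * σ (i + 1) * σ i = σ (i + 1) * σ i * σ (i + 1)

theorem cc_comm {σ : ℕ → C} {M : ℕ} (R : CoxRel σ M) {m : ℕ} (hm : m < M) (i d : ℕ) :
    ∀ j, m + 1 - j = d → i + 1 < j → σ i * cc σ m j = cc σ m j * σ i := by
  induction d with
  | zero =>
    intro j hj _
    simp [cc, hj]
  | succ d ih =>
    intro j hj hij
    rw [cc_step σ (by omega), ← mul_assoc, R.comm i j hij (by omega), mul_assoc,
      ih (j + 1) (by omega) (by omega), mul_assoc]

theorem cc_braid {σ : ℕ → C} {M : ℕ} (R : CoxRel σ M) {m : ℕ} (hm : m < M) (i d : ℕ) (hi : i + 1 ≤ m) :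
    ∀ j, i - j = d → j ≤ i → σ (i + 1) * cc σ m j = cc σ m j * σ i := by
  induction d with
  | zero =>
    intro j hj hji
    obtain rfl : i = j := by omega
    rw [cc_step σ (by omega), cc_step σ (by omega)]
    have h1 := cc_comm R hm i _ (i + 2) rfl (by omega)
    have h2 := R.braid i (by omega)
    calc σ (i + 1) * (σ i * (σ (i + 1) * cc σ m (i + 2)))
        = (σ (i + 1) * σ i * σ (i + 1)) * cc σ m (i + 2) := by simp only [mul_assoc]
      _ = σ i * σ (i + 1) * (σ i * cc σ m (i + 2)) := by rw [← h2]; simp only [mul_assoc]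
      _ = _ := by rw [h1]; simp only [mul_assoc]
  | succ d ih =>
    intro j hj hij
    rw [cc_step σ (by omega), ← mul_assoc, ← R.comm j (i + 1) (by omega) (by omega), mul_assoc,
      ih (j + 1) (by omega) (by omega), mul_assoc]

open Classical in
noncomputable def SS (σ : ℕ → C) : ℕ → Finset C
  | 0 => {1}
  | m + 1 => Finset.image₂ (· * ·) ((Finset.range (m + 2)).image (cc σ m)) (SS σ m)

theorem SS_card (σ : ℕ → C) (m : ℕ) : (SS σ m).card ≤ (m + 1).factorial := by
  classical
  induction m with
  | zero => simp [SS]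
  | succ m ih =>
    rw [SS, Nat.factorial_succ]
    refine (Finset.card_image₂_le _ _ _).trans (Nat.mul_le_mul ?_ ih)
    exact Finset.card_image_le.trans (by simp)

theorem SS_one (σ : ℕ → C) (m : ℕ) : 1 ∈ SS σ m := by
  classical
  induction m with
  | zero => simp [SS]
  | succ m ih =>
    rw [SS, Finset.mem_image₂]
    exact ⟨1, Finset.mem_image.2 ⟨m + 1, by simp, cc_top σ m⟩, 1, ih, by simp⟩

theorem SS_mul {σ : ℕ → C} {M : ℕ} (R : CoxRel σ M) {m : ℕ} (hm : m ≤ M) :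
    ∀ i < m, ∀ x ∈ SS σ m, σ i * x ∈ SS σ m := by
  classical
  induction m with
  | zero => simp
  | succ m ih =>
    intro i hi x hx
    have ih := ih (by omega)
    rw [SS, Finset.mem_image₂] at hx ⊢
    obtain ⟨c, hc, s, hs, rfl⟩ := hx
    obtain ⟨j, hj, rfl⟩ := Finset.mem_image.1 hc
    rw [Finset.mem_range] at hj
    rcases lt_trichotomy (i + 1) j with h | h | h
    · refine ⟨_, hc, σ i * s, ih i (by omega) s hs, ?_⟩
      rw [← mul_assoc, ← mul_assoc, cc_comm R (by omega) i _ j rfl h]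
    · subst h
      refine ⟨cc σ m i, Finset.mem_image.2 ⟨i, by simp; omega, rfl⟩, s, hs, ?_⟩
      rw [cc_step σ (j := i) (by omega), mul_assoc]
    · rcases Nat.lt_or_ge j i with h' | h'
      · obtain ⟨i, rfl⟩ : ∃ k, i = k + 1 := ⟨i - 1, by omega⟩
        refine ⟨_, hc, σ i * s, ih i (by omega) s hs, ?_⟩
        rw [← mul_assoc, ← mul_assoc, cc_braid R (by omega) i _ (by omega) j rfl (by omega)]
      · obtain rfl : i = j := by omega
        refine ⟨cc σ m (i + 1), Finset.mem_image.2 ⟨i + 1, by simp; omega, rfl⟩, s, hs, ?_⟩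
        rw [cc_step σ (j := i) (by omega), mul_assoc, ← mul_assoc (σ i) (σ i), R.sq i (by omega),
          one_mul]

theorem exists_perm_hom {T : Type*} [Monoid T] {m : ℕ} (τ : Fin m → T)
    (sq : ∀ i, τ i * τ i = 1)
    (comm : ∀ i j : Fin m, i.1 + 1 < j.1 → τ i * τ j = τ j * τ i)
    (braid : ∀ i j : Fin m, i.1 + 1 = j.1 → τ i * τ j * τ i = τ j * τ i * τ j) :
    ∃ ι : Equiv.Perm (Fin (m + 1)) →* T,
      ∀ i : Fin m, ι (Equiv.swap i.castSucc i.succ) = τ i := by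
  classical
  let P := Equiv.Perm (Fin (m + 1))
  let s : Fin m → P := fun i => Equiv.swap i.castSucc i.succ
  let g : Fin m → T × P := fun i => (τ i, s i)
  let σ : ℕ → T × P := fun i => if h : i < m then g ⟨i, h⟩ else 1
  have hσ : ∀ i (h : i < m), σ i = g ⟨i, h⟩ := fun i h => by simp [σ, h]
  have R : CoxRel σ m := by
    constructor
    · intro i hi
      rw [hσ i hi]
      ext1
      · exact sq _
      · exact Equiv.swap_mul_self _ _
    · intro i j hij hj
      rw [hσ j hj, hσ i (by omega)]
      ext1
      · exact comm _ _ hij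
      · apply Equiv.Perm.Disjoint.commute
        intro x
        change s ⟨i, _⟩ x = x ∨ s ⟨j, hj⟩ x = x
        rcases lt_or_ge (i + 1) x.1 with hx | hx
        · left
          apply Equiv.swap_apply_of_ne_of_ne <;> · intro h; rw [h] at hx; simp at hx <;> omega
        · right
          apply Equiv.swap_apply_of_ne_of_ne <;> · intro h; rw [h] at hx; simp at hx <;> omega
    · intro i hi
      rw [hσ (i + 1) hi, hσ i (by omega)]
      ext1
      · exact braid _ _ rfl
      · have e : (⟨i, by omega⟩ : Fin m).succ = (⟨i + 1, hi⟩ : Fin m).castSucc := rfl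
        simp only [g, s, Prod.snd_mul]
        rw [e]
        set a := (⟨i, by omega⟩ : Fin m).castSucc with ha
        set b := (⟨i + 1, hi⟩ : Fin m).castSucc with hb
        set c := (⟨i + 1, hi⟩ : Fin m).succ with hc
        have hab : a ≠ b := by simp [ha, hb]
        have hac : a ≠ c := by simp [ha, hc, Fin.ext_iff]; omega
        have hbc : b ≠ c := by simp [hb, hc, Fin.ext_iff]
        have h1 := Equiv.swap_mul_swap_mul_swap (x := c) (y := b) (z := a) hbc.symm hac.symm
        have h2 := Equiv.swap_mul_swap_mul_swap (x := a) (y := b) (z := c) hab hac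
        rw [Equiv.swap_comm b a, Equiv.swap_comm c b] at h1
        rw [h1, h2, Equiv.swap_comm]
  have closed : ∀ x ∈ Submonoid.closure (Set.range g), x ∈ SS σ m := by
    intro x hx
    induction hx using Submonoid.closure_induction_left with
    | one => exact SS_one σ m
    | mul_left x hx y hy ih =>
      obtain ⟨i, rfl⟩ := hx
      have := SS_mul R le_rfl i.1 i.2 y ih
      rwa [hσ i.1 i.2] at this
  let C := Submonoid.closure (Set.range g)
  have hfin : Finite C := Set.Finite.subset (SS σ m).finite_toSet closed
  have hcard : Nat.card C ≤ (m + 1).factorial := by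
    refine le_trans ?_ (SS_card σ m)
    rw [← Set.ncard_coe_finset]
    exact Set.ncard_le_ncard closed (SS σ m).finite_toSet
  let p : C →* P := (MonoidHom.snd T P).comp C.subtype
  have hsurj : Function.Surjective p := by
    rw [← MonoidHom.mrange_eq_top, eq_top_iff, ← Equiv.Perm.mclosure_swap_castSucc_succ m,
      Submonoid.closure_le]
    rintro _ ⟨i, rfl⟩
    exact ⟨⟨g i, Submonoid.subset_closure ⟨i, rfl⟩⟩, rfl⟩
  have hbij : Function.Bijective p := by
    rw [Nat.bijective_iff_surjective_and_card]
    refine ⟨hsurj, le_antisymm ?_ ?_⟩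
    · refine hcard.trans (le_of_eq ?_)
      simp [P, Nat.card_eq_fintype_card, Fintype.card_perm]
    · exact Nat.card_le_card_of_surjective p hsurj
  let e := MulEquiv.ofBijective p hbij
  refine ⟨((MonoidHom.fst T P).comp C.subtype).comp e.symm.toMonoidHom, fun i => ?_⟩
  have : e.symm (s i) = ⟨g i, Submonoid.subset_closure ⟨i, rfl⟩⟩ := by
    rw [MulEquiv.symm_apply_eq]; rfl
  change (e.symm (s i)).1.1 = _
  rw [this]
end Cox
end BrAux
namespace BrAux
section Abs
open Equiv
variable {X : Type*} [DecidableEq X] [Fintype X] {T : Type*} [Monoid T]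

structure BrAx (ι : Perm X →* T) (th : X → X → T) : Prop where
  symm : ∀ a b, a ≠ b → th a b = th b a
  conj : ∀ (w : Perm X) a b, a ≠ b → ι w * th a b = th (w a) (w b) * ι w
  sq : ∀ a b, a ≠ b → th a b * th a b = th a b
  swl : ∀ a b, a ≠ b → ι (swap a b) * th a b = th a b
  comm : ∀ a b c d, a ≠ b → c ≠ d → a ≠ c → a ≠ d → b ≠ c → b ≠ d → th a b * th c d = th c d * th a b
  tril : ∀ a b c, a ≠ b → b ≠ c → a ≠ c → th a b * th b c = ι (swap a c) * th b c

omit [Fintype X] in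
theorem BrAx.trir {ι : Perm X →* T} {th : X → X → T} (D : BrAx ι th) (a b c : X) (hab : a ≠ b)
    (hbc : b ≠ c) (hac : a ≠ c) : th a b * th b c = th a b * ι (swap a c) := by
  have h := D.conj (swap a c) b c hbc
  rw [swap_apply_right, swap_apply_of_ne_of_ne hab.symm hbc, D.symm b a hab.symm] at h
  rw [D.tril a b c hab hbc hac, h]

structure BrData (ι : Perm X →* T) (th : X → X → T) : Prop extends BrAx ι th where
  gen : ∀ p : T → Prop, p 1 → (∀ t w, p t → p (t * ι w)) →
    (∀ t a b, a ≠ b → p t → p (t * th a b)) → ∀ t, p t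

inductive IsE (th : X → X → T) : Perm X → T → Prop
  | one : IsE th 1 1
  | mul {α t} (a b) : IsE th α t → a ≠ b → α a = a → α b = b → IsE th (swap a b * α) (th a b * t)

variable {ι : Perm X →* T} {th : X → X → T}

omit [Fintype X] in
theorem IsE.invol {α : Perm X} {t : T} (h : IsE th α t) : ∀ x, α (α x) = x := by
  induction h with
  | one => simp
  | mul a b h hab ha hb ih =>
    intro x
    simp only [Perm.mul_apply, swap_apply_def]
    grind

theorem exists_isE (th : X → X → T) (k : ℕ) : ∀ α : Perm X, α.support.card = k → (∀ x, α (α x) = x) →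
    ∃ t, IsE th α t := by
  induction k using Nat.strong_induction_on with
  | _ k ih =>
    intro α hk hα
    by_cases h1 : α = 1
    · subst h1; exact ⟨1, .one⟩
    · obtain ⟨a, ha⟩ : ∃ a, α a ≠ a := by
        by_contra! hc
        exact h1 (Equiv.ext hc)
      obtain ⟨t, ht⟩ := ih _ (hk ▸ Perm.card_support_swap_mul ha) (swap a (α a) * α) rfl (by
        intro x
        simp only [Perm.mul_apply, swap_apply_def]
        grind)
      refine ⟨th a (α a) * t, ?_⟩
      have := IsE.mul a (α a) ht ha.symm (by simp) (by simp [hα])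
      simpa [← mul_assoc] using this

variable (D : BrData ι th)
include D

omit [Fintype X] in
theorem IsE.absl {α : Perm X} {t : T} (h : IsE th α t) : ∀ c, α c ≠ c → th c (α c) * t = t := by
  induction h with
  | one => simp
  | @mul α t a b h hab ha hb ih =>
    intro c hc
    simp only [Perm.mul_apply] at hc ⊢
    by_cases h1 : c = a
    · subst h1
      rw [ha, swap_apply_left, ← mul_assoc, D.sq _ _ hab]
    by_cases h2 : c = b
    · subst h2
      rw [hb, swap_apply_right, D.symm c a hab.symm, ← mul_assoc, D.sq _ _ hab]
    have h3 : α c ≠ a := fun h => h1 (α.injective (h.trans ha.symm))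
    have h4 : α c ≠ b := fun h => h2 (α.injective (h.trans hb.symm))
    rw [swap_apply_of_ne_of_ne h3 h4] at hc ⊢
    rw [← mul_assoc, D.comm _ _ _ _ hc.symm hab h1 h2 h3 h4, mul_assoc, ih c hc]

omit [Fintype X] in
theorem IsE.comm {α : Perm X} {t : T} (h : IsE th α t) : ∀ c d, c ≠ d → α c = c → α d = d →
    th c d * t = t * th c d := by
  induction h with
  | one => simp
  | @mul α t a b h hab ha hb ih =>
    intro c d hcd hc hd
    simp only [Perm.mul_apply, swap_apply_def] at hc hd
    rw [← mul_assoc, D.comm c d a b hcd hab (by grind) (by grind) (by grind) (by grind), mul_assoc,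
      ih c d hcd (by grind) (by grind), mul_assoc]

omit [Fintype X] in
theorem IsE.absr {α : Perm X} {t : T} (h : IsE th α t) : ∀ c, α c ≠ c → t * th c (α c) = t := by
  induction h with
  | one => simp
  | @mul α t a b h hab ha hb ih =>
    intro c hc
    simp only [Perm.mul_apply] at hc ⊢
    by_cases h1 : c = a
    · subst h1
      rw [ha, swap_apply_left, mul_assoc, ← h.comm D c b hab ha hb, ← mul_assoc, D.sq _ _ hab]
    by_cases h2 : c = b
    · subst h2
      rw [hb, swap_apply_right, D.symm c a hab.symm, mul_assoc, ← h.comm D a c hab ha hb,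
        ← mul_assoc, D.sq _ _ hab]
    have h3 : α c ≠ a := fun h => h1 (α.injective (h.trans ha.symm))
    have h4 : α c ≠ b := fun h => h2 (α.injective (h.trans hb.symm))
    rw [swap_apply_of_ne_of_ne h3 h4] at hc ⊢
    rw [mul_assoc, ih c hc]

omit [Fintype X] in
theorem IsE.uniq_aux {α β : Perm X} {t s : T} (h : IsE th α t) (k : IsE th β s) :
    (∀ x, β x ≠ x → α x = β x) → s * t = t ∧ t * s = t := by
  induction k with
  | one => simp
  | @mul β s a b k hab ha hb ih =>
    intro H
    have h1 := ih (by
      intro x hx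
      have := H x
      simp only [Perm.mul_apply, swap_apply_def] at this
      have := β.injective.eq_iff (a := x) (b := a)
      have := β.injective.eq_iff (a := x) (b := b)
      grind)
    have e : α a = b := by
      have := H a
      simp only [Perm.mul_apply, ha, swap_apply_left] at this
      exact this hab.symm
    have h2 := h.absl D a (by rw [e]; exact hab.symm)
    have h3 := h.absr D a (by rw [e]; exact hab.symm)
    rw [e] at h2 h3
    rw [mul_assoc, h1.1, h2, ← mul_assoc, h3, h1.2]
    exact ⟨rfl, rfl⟩

omit [Fintype X] in
theorem IsE.uniq {α : Perm X} {t s : T} (h : IsE th α t) (k : IsE th α s) : t = s := by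
  rw [← (h.uniq_aux D k fun _ _ => rfl).1, (k.uniq_aux D h fun _ _ => rfl).2]

omit [Fintype X] in
theorem ii (w : Perm X) (x : T) : ι w * (ι w⁻¹ * x) = x := by
  rw [← mul_assoc, ← map_mul]; simp

omit [Fintype X] in
theorem ii' (w : Perm X) (x : T) : ι w⁻¹ * (ι w * x) = x := by
  rw [← mul_assoc, ← map_mul]; simp

omit [Fintype X] in
theorem IsE.conj {α : Perm X} {t : T} (h : IsE th α t) (w : Perm X) :
    IsE th (w * α * w⁻¹) (ι w * t * ι w⁻¹) := by
  induction h with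
  | one => simp only [mul_one, mul_inv_cancel, ← map_mul, map_one]; exact .one
  | @mul α t a b h hab ha hb ih =>
    have := IsE.mul (w a) (w b) ih (by simpa using hab) (by simp [ha]) (by simp [hb])
    convert this using 1
    · have : swap (w a) (w b) = w * swap a b * w⁻¹ := by
        rw [Equiv.swap_apply_apply]
      rw [this]; group
    · rw [← mul_assoc, ← mul_assoc, ← mul_assoc, D.conj w a b hab]

def HH (α : Perm X) : Subgroup (Perm X) where
  carrier := {w | (∀ x, w (α x) = α (w x)) ∧ ∀ x, α x = x → w x = x}
  one_mem' := by simp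
  mul_mem' := by
    rintro u v ⟨h1, h2⟩ ⟨h3, h4⟩
    refine ⟨fun x => by simp [h1, h3], fun x hx => by simp [h4 x hx, h2 x hx]⟩
  inv_mem' := by
    rintro u ⟨h1, h2⟩
    refine ⟨fun x => by rw [Perm.inv_eq_iff_eq, h1]; simp, fun x hx => by rw [Perm.inv_eq_iff_eq, h2 x hx]⟩

theorem IsE.absH {α : Perm X} {t : T} (h : IsE th α t) (k : ℕ) :
    ∀ w ∈ HH α, w.support.card = k → ι w * t = t := by
  have hα := h.invol
  have sw1 : ∀ a, α a ≠ a → ι (swap a (α a)) * t = t := by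
    intro a ha
    rw [← h.absl D a ha, ← mul_assoc, D.swl _ _ ha.symm]
  have sw2 : ∀ a c, α a ≠ a → α c ≠ c → a ≠ c → α a ≠ c →
      ι (swap a c) * (ι (swap (α a) (α c)) * t) = t := by
    intro a c ha hc hac hac'
    have hd : α c ≠ a := fun h => hac' (by rw [← h, hα])
    have hbd : α a ≠ α c := fun h => hac (α.injective h)
    have e1 : th a (α c) * t = ι (swap a c) * t := by
      have := h.absl D c hc
      rw [D.symm _ _ hc.symm] at this
      rw [← this, ← mul_assoc, D.tril a (α c) c hd.symm hc hac, mul_assoc]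
    have e2 : th a (α c) * t = ι (swap (α c) (α a)) * t := by
      have := h.absl D a ha
      rw [← this, ← mul_assoc, D.symm a (α c) hd.symm, D.tril (α c) a (α a) hd ha.symm hbd.symm,
        mul_assoc]
    rw [swap_comm (α a), ← e2, e1, ← mul_assoc, ← map_mul, swap_mul_self, map_one, one_mul]
  induction k using Nat.strong_induction_on with
  | _ k ih =>
    rintro w ⟨hw1, hw2⟩ hk
    by_cases h1 : w = 1
    · simp [h1]
    obtain ⟨a, ha⟩ : ∃ a, w a ≠ a := by
      by_contra! hc
      exact h1 (Equiv.ext hc)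
    have haa : α a ≠ a := fun h => ha (hw2 a h)
    have hcc : α (w a) ≠ w a := by rw [← hw1]; simpa using haa
    by_cases hc : w a = α a
    · have hm : swap a (w a) * w ∈ HH α := by
        refine mul_mem ?_ ⟨hw1, hw2⟩
        rw [hc]
        constructor
        · intro x
          simp only [swap_apply_def]
          have := hα a
          have := hα x
          grind
        · intro x hx
          simp only [swap_apply_def]
          have := hα a
          grind
      have := ih _ (hk ▸ Perm.card_support_swap_mul ha) _ hm rfl
      rw [map_mul, mul_assoc, hc] at this
      have e := sw1 a haa
      have h3 : ι (swap a (α a)) * (ι (swap a (α a)) * (ι w * t)) = t := by rw [this, e]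
      rwa [← mul_assoc, ← map_mul, swap_mul_self, map_one, one_mul] at h3
    · set c := w a with hcdef
      have hwb : w (α a) = α c := hw1 a
      have hd : α c ≠ a := fun h => hc (by rw [← h, hα])
      have hbd : α a ≠ α c := fun h => ha (α.injective h).symm
      set v := swap (α a) (α c) * (swap a c * w) with hv
      have hv0 : ∀ x, v x = swap (α a) (α c) (swap a c (w x)) := fun x => rfl
      have hm : v ∈ HH α := by
        rw [hv, ← mul_assoc]
        refine mul_mem ?_ ⟨hw1, hw2⟩
        constructor
        · intro x
          simp only [Perm.mul_apply, swap_apply_def]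
          have := hα a
          have := hα c
          have := hα x
          grind
        · intro x hx
          simp only [Perm.mul_apply, swap_apply_def]
          have := hα a
          have := hα c
          grind
      have hlt : v.support.card < k := by
        rw [← hk]
        apply Finset.card_lt_card
        rw [Finset.ssubset_iff_of_subset]
        · refine ⟨a, by simpa using ha, ?_⟩
          simp only [Perm.mem_support, not_not, hv0, ← hcdef, swap_apply_right]
          exact swap_apply_of_ne_of_ne haa.symm hd.symm
        · intro x hx
          rw [Perm.mem_support] at hx ⊢
          intro hwx
          apply hx
          have n1 : x ≠ a := fun h => ha (by rw [h] at hwx; exact hwx)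
          have n2 : x ≠ c := fun h => ha (w.injective (by rw [h] at hwx; exact hwx))
          have n3 : x ≠ α a := fun h => hbd (by rw [h, hwb] at hwx; exact hwx.symm)
          have n4 : x ≠ α c := fun h => n3 (w.injective (by rw [hwx, hwb, h]))
          rw [hv0, hwx, swap_apply_of_ne_of_ne n1 n2, swap_apply_of_ne_of_ne n3 n4]
      have := ih _ hlt v hm rfl
      rw [hv, map_mul, map_mul, mul_assoc, mul_assoc] at this
      have e := sw2 a c haa hcc (Ne.symm ha) (Ne.symm hc)
      have h3 := congrArg (fun z => ι (swap a c) * (ι (swap (α a) (α c)) * z)) this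
      simp only [e] at h3
      rw [← mul_assoc (ι (swap (α a) (α c))), ← map_mul, swap_mul_self, map_one, one_mul,
        ← mul_assoc, ← map_mul, swap_mul_self, map_one, one_mul] at h3
      exact h3

omit [Fintype X] in
theorem normal_form (x : T) : ∃ u α t, IsE th α t ∧ x = ι u * t := by
  have key : ∀ x w, (∃ u α t, IsE th α t ∧ x = ι u * t) →
      (∃ u α t, IsE th α t ∧ x * ι w = ι u * t) := by
    rintro _ w ⟨u, α, t, ht, rfl⟩
    refine ⟨u * w, _, _, ht.conj D w⁻¹, ?_⟩
    rw [map_mul, mul_assoc, mul_assoc, mul_assoc, inv_inv, ii D]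
  refine D.gen (fun x => ∃ u α t, IsE th α t ∧ x = ι u * t) ⟨1, 1, 1, .one, by simp⟩ key ?_ x
  rintro _ a b hab ⟨u, α, t, ht, rfl⟩
  have step : ∀ a b, a ≠ b → α b ≠ b → ∃ v β s, IsE th β s ∧ ι u * t * th a b = ι v * s := by
    intro a b hab hb
    by_cases hba : α b = a
    · subst hba
      refine ⟨u, α, t, ht, ?_⟩
      rw [D.symm _ _ hab, mul_assoc, ht.absr D b hb]
    · have h1 := ht.absr D b hb
      have h2 : t * th a b = t * ι (swap (α b) a) := by
        rw [D.symm a b hab, ← h1, D.symm b _ hb.symm, mul_assoc, D.toBrAx.trir (α b) b a hb hab.symm hba,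
          ← mul_assoc]
      rw [mul_assoc, h2, ← mul_assoc]
      exact key _ _ ⟨u, α, t, ht, rfl⟩
  by_cases hb : α b = b
  · by_cases ha : α a = a
    · refine ⟨u, _, _, IsE.mul a b ht hab ha hb, ?_⟩
      rw [mul_assoc, ht.comm D a b hab ha hb]
    · rw [D.symm a b hab]
      exact step b a hab.symm ha
  · exact step a b hab hb

end Abs
end BrAux

namespace BrAux
/-! Part C: the action on perfect matchings -/
section Act
open Equiv
variable {Y : Type*} [DecidableEq Y]

abbrev MM (Y : Type*) := {f : Y → Y // ∀ x, f (f x) = x ∧ f x ≠ x}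

def tf (a b : Y) (f : Y → Y) : Y → Y := fun x =>
  if x = a then b else if x = b then a else if f x = a then f b else if f x = b then f a else f x

def Th (a b : Y) : Function.End (MM Y) := fun f =>
  if h : a = b then f else ⟨tf a b f.1, by
    obtain ⟨f, hf⟩ := f
    intro x
    have := hf x
    have := hf a
    have := hf b
    have := hf (f x)
    simp only [tf]
    grind⟩

theorem Th_val {a b : Y} (h : a ≠ b) (f : MM Y) : (Th a b f).1 = tf a b f.1 := by
  simp [Th, h]

def cj : Perm Y →* Function.End (MM Y) where
  toFun w := fun f => ⟨fun x => w (f.1 (w⁻¹ x)), fun x => by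
    have := f.2 (w⁻¹ x)
    refine ⟨?_, fun h => this.2 ?_⟩
    · have e : ∀ z, w⁻¹ (w z) = z := fun z => w.symm_apply_apply z
      beta_reduce
      rw [e, this.1]
      exact w.apply_symm_apply x
    rw [← Perm.eq_inv_iff_eq] at h
    exact h⟩
  map_one' := by
    funext f; apply Subtype.ext; funext x; rfl
  map_mul' u v := by
    funext f; apply Subtype.ext; funext x
    change u (v (f.1 ((u * v)⁻¹ x))) = u (v (f.1 (v⁻¹ (u⁻¹ x))))
    rw [mul_inv_rev]; rfl

theorem cj_val (w : Perm Y) (f : MM Y) (x : Y) : (cj w f).1 x = w (f.1 (w⁻¹ x)) := rfl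

theorem MM_ext {f g : Function.End (MM Y)} (h : ∀ m x, (f m).1 x = (g m).1 x) : f = g := by
  funext m; apply Subtype.ext; funext x; exact h m x

theorem end_mul (f g : Function.End (MM Y)) (m : MM Y) : (f * g) m = f (g m) := rfl

theorem brAx_MM : BrAx (cj (Y := Y)) Th := by
  constructor
  · intro a b hab
    apply MM_ext
    intro f x
    rw [Th_val hab, Th_val hab.symm]
    have := f.2 x
    simp only [tf]
    grind
  · intro w a b hab
    apply MM_ext
    intro f x
    have hab' : w a ≠ w b := by simpa using hab
    rw [end_mul, end_mul, cj_val, Th_val hab, Th_val hab']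
    have e : ∀ z, w⁻¹ (w z) = z := fun z => w.symm_apply_apply z
    simp only [tf, cj_val, Perm.inv_eq_iff_eq, e, EmbeddingLike.apply_eq_iff_eq]
    split_ifs <;> rfl
  · intro a b hab
    apply MM_ext
    intro f x
    rw [end_mul, Th_val hab, Th_val hab]
    have := f.2 x
    have := f.2 a
    have := f.2 b
    simp only [tf]
    grind
  · intro a b hab
    apply MM_ext
    intro f x
    rw [end_mul, cj_val, Th_val hab]
    have := f.2 x
    have := f.2 a
    have := f.2 b
    simp only [tf, swap_inv, swap_apply_def]
    grind
  · intro a b c d hab hcd hac had hbc hbd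
    apply MM_ext
    intro f x
    rw [end_mul, end_mul, Th_val hab, Th_val hcd, Th_val hcd, Th_val hab]
    have := f.2 x
    have := f.2 a
    have := f.2 b
    have := f.2 c
    have := f.2 d
    simp only [tf]
    grind (splits := 30)
  · intro a b c hab hbc hac
    apply MM_ext
    intro f x
    rw [end_mul, end_mul, cj_val, Th_val hab, Th_val hbc]
    have := f.2 x
    have := f.2 a
    have := f.2 b
    have := f.2 c
    simp only [tf, swap_inv, swap_apply_def]
    grind
end Act

section Lift
open Equiv
variable {E : Type*} [Monoid E] {m : ℕ}

theorem lo_ne_hi {n : ℕ} (i : Fin (n - 1)) : lo i ≠ hi i := by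
  simp [lo, hi]

def genMap (c : Perm (Fin m) →* E) (th : Fin m → Fin m → E) : BrauerGen m → E :=
  Sum.elim (fun i => c (sPerm i)) (fun i => th (lo i) (hi i))

theorem dist_cases {i j : ℕ} (h : Nat.dist i j = 1) : j = i + 1 ∨ i = j + 1 := by
  unfold Nat.dist at h; omega

theorem rel_of_brAx {c : Perm (Fin m) →* E} {th : Fin m → Fin m → E} (D : BrAx c th) :
    ∀ a b : FreeMonoid (BrauerGen m), BrauerRel m a b →
      FreeMonoid.lift (genMap c th) a = FreeMonoid.lift (genMap c th) b := by
  have far : ∀ i j : Fin (m - 1), 1 < Nat.dist i.1 j.1 → lo i ≠ lo j ∧ lo i ≠ hi j ∧ hi i ≠ lo j ∧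
      hi i ≠ hi j := by
    intro i j h
    unfold Nat.dist at h
    simp only [lo, hi, ne_eq, Fin.mk.injEq]
    omega
  have near : ∀ i j : Fin (m - 1), Nat.dist i.1 j.1 = 1 → ∃ a b d, a ≠ b ∧ b ≠ d ∧ a ≠ d ∧
      sPerm i = swap a b ∧ sPerm j = swap b d ∧ th (lo i) (hi i) = th a b ∧
        th (lo j) (hi j) = th b d := by
    intro i j h
    rcases dist_cases h with h | h
    · have e : lo j = hi i := by simp [lo, hi, h]
      refine ⟨lo i, hi i, hi j, lo_ne_hi i, e ▸ lo_ne_hi j, ?_, rfl, ?_, rfl, ?_⟩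
      · simp only [lo, hi, ne_eq, Fin.mk.injEq]; omega
      · rw [sPerm, e]
      · rw [e]
    · have e : lo i = hi j := by simp [lo, hi, h]
      refine ⟨hi i, lo i, lo j, (lo_ne_hi i).symm, e ▸ (lo_ne_hi j).symm, ?_, ?_, ?_, ?_, ?_⟩
      · simp only [lo, hi, ne_eq, Fin.mk.injEq]; omega
      · rw [sPerm, swap_comm]
      · rw [sPerm, e, swap_comm]
      · exact D.symm _ _ (lo_ne_hi i)
      · rw [e]; exact D.symm _ _ (lo_ne_hi j)
  have sw3 : ∀ a b d : Fin m, a ≠ b → b ≠ d → a ≠ d → swap a b * swap b d * swap a b = swap a d := by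
    intro a b d h1 h2 h3
    have h1 := Equiv.swap_mul_swap_mul_swap (x := d) (y := b) (z := a) h2.symm h3.symm
    rw [Equiv.swap_comm b a, Equiv.swap_comm d b] at h1
    exact h1
  have swl := D.swl
  have swr : ∀ a b, a ≠ b → th a b * c (swap a b) = th a b := by
    intro a b h
    have h1 := D.conj (swap a b) a b h
    rw [swap_apply_left, swap_apply_right, D.swl a b h, D.symm b a h.symm] at h1
    exact h1.symm
  intro a b h
  induction h with
  | sigma_sq i =>
    simp only [map_mul, map_one, fσ, FreeMonoid.lift_eval_of, genMap, Sum.elim_inl]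
    rw [← map_mul, sPerm, swap_mul_self, map_one]
  | sigma_comm i j h =>
    simp only [map_mul, fσ, FreeMonoid.lift_eval_of, genMap, Sum.elim_inl]
    rw [← map_mul, ← map_mul]
    congr 1
    obtain ⟨h1, h2, h3, h4⟩ := far i j h
    ext x
    simp only [sPerm, Perm.mul_apply, swap_apply_def]
    grind
  | braid i j h =>
    simp only [map_mul, fσ, FreeMonoid.lift_eval_of, genMap, Sum.elim_inl]
    obtain ⟨a, b, d, h1, h2, h3, e1, e2, -, -⟩ := near i j h
    rw [e1, e2, ← map_mul, ← map_mul, ← map_mul, ← map_mul, sw3 a b d h1 h2 h3]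
    have := sw3 d b a h2.symm h1.symm h3.symm
    rw [swap_comm d b, swap_comm b a, swap_comm d a] at this
    rw [this]
  | theta_idem i =>
    simp only [map_mul, fθ, FreeMonoid.lift_eval_of, genMap, Sum.elim_inr]
    exact D.sq _ _ (lo_ne_hi i)
  | theta_comm i j h =>
    simp only [map_mul, fθ, FreeMonoid.lift_eval_of, genMap, Sum.elim_inr]
    obtain ⟨h1, h2, h3, h4⟩ := far i j h
    exact D.comm _ _ _ _ (lo_ne_hi i) (lo_ne_hi j) h1 h2 h3 h4
  | theta_theta_theta i j h =>
    simp only [map_mul, fθ, FreeMonoid.lift_eval_of, genMap, Sum.elim_inr]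
    obtain ⟨a, b, d, h1, h2, h3, -, -, e1, e2⟩ := near i j h
    rw [e1, e2, D.trir a b d h1 h2 h3, mul_assoc, D.conj _ _ _ h1, swap_apply_left,
      swap_apply_of_ne_of_ne h1.symm h2, ← mul_assoc, D.symm d b h2.symm, D.trir a b d h1 h2 h3,
      mul_assoc, ← map_mul, swap_mul_self, map_one, mul_one]
  | theta_sigma i =>
    simp only [map_mul, fθ, fσ, FreeMonoid.lift_eval_of, genMap, Sum.elim_inr, Sum.elim_inl]
    exact swr _ _ (lo_ne_hi i)
  | sigma_theta i =>
    simp only [map_mul, fθ, fσ, FreeMonoid.lift_eval_of, genMap, Sum.elim_inr, Sum.elim_inl]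
    exact swl _ _ (lo_ne_hi i)
  | theta_sigma_comm i j h =>
    simp only [map_mul, fθ, fσ, FreeMonoid.lift_eval_of, genMap, Sum.elim_inr, Sum.elim_inl]
    obtain ⟨h1, h2, h3, h4⟩ := far i j h
    rw [D.conj _ _ _ (lo_ne_hi i), sPerm, swap_apply_of_ne_of_ne h1 h2,
      swap_apply_of_ne_of_ne h3 h4]
  | sigma_theta_theta i j h =>
    simp only [map_mul, fθ, fσ, FreeMonoid.lift_eval_of, genMap, Sum.elim_inr, Sum.elim_inl]
    obtain ⟨a, b, d, h1, h2, h3, e1, e2, e3, e4⟩ := near i j h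
    rw [e1, e2, e3, e4, mul_assoc, D.symm b d h2, D.symm a b h1, D.tril d b a h2.symm h1.symm h3.symm,
      swap_comm d a, ← sw3 a b d h1 h2 h3, map_mul, map_mul, mul_assoc, mul_assoc,
      D.symm b a h1.symm, swl a b h1, ← mul_assoc, ← map_mul, swap_mul_self, map_one, one_mul]
  | theta_theta_sigma i j h =>
    simp only [map_mul, fθ, fσ, FreeMonoid.lift_eval_of, genMap, Sum.elim_inr, Sum.elim_inl]
    obtain ⟨a, b, d, h1, h2, h3, e1, e2, e3, e4⟩ := near i j h
    rw [e1, e2, e3, e4, D.trir a b d h1 h2 h3, ← sw3 a b d h1 h2 h3, map_mul, map_mul, ← mul_assoc,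
      ← mul_assoc, swr a b h1, mul_assoc, mul_assoc, ← map_mul, swap_mul_self, map_one, mul_one]
end Lift
end BrAux

namespace BrAux
/-! Part D: the data in the presented monoid -/
section Data
open Equiv

theorem exists_perm_vec {n k : ℕ} (x y : Fin k → Fin n) (hx : Function.Injective x)
    (hy : Function.Injective y) : ∃ w : Perm (Fin n), ∀ i, w (x i) = y i := by
  have := Equiv.Perm.isMultiplyPretransitive (Fin n) k
  obtain ⟨g, hg⟩ := MulAction.exists_smul_eq (M := Perm (Fin n)) (⟨x, hx⟩ : Fin k ↪ Fin n) ⟨y, hy⟩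
  refine ⟨g, fun i => ?_⟩
  exact DFunLike.congr_fun hg i

theorem exists_perm2 {n : ℕ} {a b a' b' : Fin n} (h : a ≠ b) (h' : a' ≠ b') :
    ∃ w : Perm (Fin n), w a = a' ∧ w b = b' := by
  obtain ⟨w, hw⟩ := exists_perm_vec ![a, b] ![a', b'] (by simpa [Function.Injective, Fin.forall_fin_succ] using ⟨h, h.symm⟩)
    (by simpa [Function.Injective, Fin.forall_fin_succ] using ⟨h', h'.symm⟩)
  exact ⟨w, hw 0, hw 1⟩

theorem exists_perm3 {n : ℕ} {a b c a' b' c' : Fin n} (h : a ≠ b ∧ b ≠ c ∧ a ≠ c)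
    (h' : a' ≠ b' ∧ b' ≠ c' ∧ a' ≠ c') :
    ∃ w : Perm (Fin n), w a = a' ∧ w b = b' ∧ w c = c' := by
  obtain ⟨w, hw⟩ := exists_perm_vec ![a, b, c] ![a', b', c']
    (by simp [Function.Injective, Fin.forall_fin_succ]; grind)
    (by simp [Function.Injective, Fin.forall_fin_succ]; grind)
  exact ⟨w, hw 0, hw 1, hw 2⟩

theorem exists_perm4 {n : ℕ} {a b c d a' b' c' d' : Fin n}
    (h : a ≠ b ∧ c ≠ d ∧ a ≠ c ∧ a ≠ d ∧ b ≠ c ∧ b ≠ d)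
    (h' : a' ≠ b' ∧ c' ≠ d' ∧ a' ≠ c' ∧ a' ≠ d' ∧ b' ≠ c' ∧ b' ≠ d') :
    ∃ w : Perm (Fin n), w a = a' ∧ w b = b' ∧ w c = c' ∧ w d = d' := by
  obtain ⟨w, hw⟩ := exists_perm_vec ![a, b, c, d] ![a', b', c', d']
    (by simp [Function.Injective, Fin.forall_fin_succ]; grind)
    (by simp [Function.Injective, Fin.forall_fin_succ]; grind)
  exact ⟨w, hw 0, hw 1, hw 2, hw 3⟩

variable {n : ℕ}
theorem rel_eq {a b : FreeMonoid (BrauerGen n)} (h : BrauerRel n a b) :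
    PresentedMonoid.mk (BrauerRel n) a = PresentedMonoid.mk (BrauerRel n) b :=
  PresentedMonoid.mk_eq_mk_of_rel h

theorem exists_iota (m : ℕ) : ∃ ι : Perm (Fin (m + 1)) →* BrauerMonoid (m + 1),
    ∀ i : Fin (m + 1 - 1), ι (sPerm i) = σB i := by
  refine exists_perm_hom (m := m) (fun i => σB (n := m + 1) i) ?_ ?_ ?_
  · intro i
    exact rel_eq (BrauerRel.sigma_sq (n := m + 1) i)
  · intro i j h
    exact rel_eq (BrauerRel.sigma_comm (n := m + 1) i j (by unfold Nat.dist; omega))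
  · intro i j h
    exact rel_eq (BrauerRel.braid (n := m + 1) i j (by unfold Nat.dist; omega))

theorem theta_conj (i j : Fin (n - 1)) (h : Nat.dist i.1 j.1 = 1) :
    σB i * σB j * θB i = θB j * (σB i * σB j) := by
  have h1 : σB i * σB i = 1 := rel_eq (BrauerRel.sigma_sq i)
  have h2 : σB j * σB j = 1 := rel_eq (BrauerRel.sigma_sq j)
  have h3 : σB i * θB j * θB i = σB j * θB i := rel_eq (BrauerRel.sigma_theta_theta i j h)
  have h4 : θB i * θB j * σB i = θB i * σB j := rel_eq (BrauerRel.theta_theta_sigma i j h)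
  have h5 : θB i * θB i = θB i := rel_eq (BrauerRel.theta_idem i)
  have h6 : θB j * θB i * θB j = θB j :=
    rel_eq (BrauerRel.theta_theta_theta j i (by rw [Nat.dist_comm]; exact h))
  have h7 : θB j * θB i = σB i * σB j * θB i := by
    rw [mul_assoc (σB i) (σB j), ← h3, mul_assoc (σB i), ← mul_assoc, h1, one_mul]
  have h8 : θB i * θB j * (σB i * σB j) = θB i := by
    rw [← mul_assoc, h4, mul_assoc, h2, mul_one]
  rw [← h7]
  calc θB j * θB i = θB j * (θB i * θB j * (σB i * σB j)) := by rw [h8]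
    _ = (θB j * θB i * θB j) * (σB i * σB j) := by simp only [mul_assoc]
    _ = _ := by rw [h6]

variable {m : ℕ} {ι : Perm (Fin (m + 1)) →* BrauerMonoid (m + 1)}

theorem fix_comm (hι : ∀ i : Fin (m + 1 - 1), ι (sPerm i) = σB i) (z : Fin (m + 1 - 1)) (hz : z.1 = 0)
    (k : ℕ) : ∀ w : Perm (Fin (m + 1)), w.support.card = k → w (lo z) = lo z → w (hi z) = hi z →
    ι w * θB z = θB z * ι w := by
  have hsw0 : ∀ d (a b : Fin (m + 1)), 2 ≤ a.1 → a.1 + d + 1 = b.1 →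
      ι (swap a b) * θB z = θB z * ι (swap a b) := by
    intro d
    induction d with
    | zero =>
      intro a b ha hab
      let i : Fin (m + 1 - 1) := ⟨a.1, by have := b.2; omega⟩
      have e : swap a b = sPerm i := by
        rw [sPerm]; congr 1; ext; simp [hi, i]; omega
      rw [e, hι]
      exact (rel_eq (BrauerRel.theta_sigma_comm z i (by unfold Nat.dist; simp [i]; omega))).symm
    | succ d ih =>
      intro a b ha hab
      let i : Fin (m + 1 - 1) := ⟨a.1 + d + 1, by have := b.2; omega⟩
      have e : swap a b = sPerm i * swap a (lo i) * sPerm i := by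
        have eb : b = hi i := by ext; simp [hi, i]; omega
        rw [sPerm, eb, Equiv.swap_mul_swap_mul_swap, swap_comm]
        · simp [lo, i, Fin.ext_iff]; omega
        · simp [hi, i, Fin.ext_iff]; omega
      have h1 : σB i * θB z = θB z * σB i :=
        (rel_eq (BrauerRel.theta_sigma_comm z i (by unfold Nat.dist; simp [i]; omega))).symm
      have h2 := ih a (lo i) ha (by simp [lo, i])
      rw [e, map_mul, map_mul, hι, mul_assoc, h1, ← mul_assoc, mul_assoc (σB i), h2, ← mul_assoc, h1]
      simp only [mul_assoc]
  have hsw : ∀ a b : Fin (m + 1), a ≠ b → 2 ≤ a.1 → 2 ≤ b.1 →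
      ι (swap a b) * θB z = θB z * ι (swap a b) := by
    intro a b hab ha hb
    rcases lt_or_gt_of_ne hab with h | h
    · exact hsw0 (b.1 - a.1 - 1) a b ha (by have : a.1 < b.1 := h; omega)
    · rw [swap_comm]
      exact hsw0 (a.1 - b.1 - 1) b a hb (by have : b.1 < a.1 := h; omega)
  have two : ∀ a : Fin (m + 1), a ≠ lo z → a ≠ hi z → 2 ≤ a.1 := by
    intro a h1 h2
    simp only [lo, hi, ne_eq, Fin.ext_iff] at h1 h2
    omega
  induction k using Nat.strong_induction_on with
  | _ k ih =>
    intro w hk h0 h1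
    by_cases hw : w = 1
    · simp [hw]
    obtain ⟨a, ha⟩ : ∃ a, w a ≠ a := by
      by_contra! hc
      exact hw (Equiv.ext hc)
    have n1 : a ≠ lo z := fun h => ha (h ▸ h0)
    have n2 : a ≠ hi z := fun h => ha (h ▸ h1)
    have n3 : w a ≠ lo z := fun h => n1 (w.injective (h.trans h0.symm))
    have n4 : w a ≠ hi z := fun h => n2 (w.injective (h.trans h1.symm))
    have h2 := ih _ (hk ▸ Perm.card_support_swap_mul ha) (swap a (w a) * w) rfl
      (by rw [Perm.mul_apply, h0, swap_apply_of_ne_of_ne n1.symm n3.symm])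
      (by rw [Perm.mul_apply, h1, swap_apply_of_ne_of_ne n2.symm n4.symm])
    have h3 := hsw a (w a) ha.symm (two _ n1 n2) (two _ n3 n4)
    have e : w = swap a (w a) * (swap a (w a) * w) := by rw [← mul_assoc, swap_mul_self, one_mul]
    rw [e, map_mul, mul_assoc, h2, ← mul_assoc, h3, mul_assoc]

theorem theta_std (hι : ∀ i : Fin (m + 1 - 1), ι (sPerm i) = σB i) (z : Fin (m + 1 - 1)) (hz : z.1 = 0)
    (k : ℕ) : ∀ i : Fin (m + 1 - 1), i.1 = k →
      ∃ g : Perm (Fin (m + 1)), g (lo z) = lo i ∧ g (hi z) = hi i ∧ ι g * θB z = θB i * ι g := by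
  induction k with
  | zero =>
    intro i hi0
    obtain rfl : i = z := by ext; omega
    exact ⟨1, rfl, rfl, by simp⟩
  | succ k ih =>
    intro j hj
    let i : Fin (m + 1 - 1) := ⟨k, by have := j.2; omega⟩
    obtain ⟨g, h1, h2, h3⟩ := ih i rfl
    have e : hi i = lo j := by ext; simp [hi, lo, i, hj]
    refine ⟨sPerm i * sPerm j * g, ?_, ?_, ?_⟩
    · rw [Perm.mul_apply, Perm.mul_apply, h1, sPerm, sPerm, swap_apply_of_ne_of_ne (x := lo i), swap_apply_left, e]
      · rw [← e]; exact lo_ne_hi i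
      · simp [lo, hi, i, hj, Fin.ext_iff]; omega
    · rw [Perm.mul_apply, Perm.mul_apply, h2, sPerm, sPerm, e, swap_apply_left, swap_apply_of_ne_of_ne]
      · simp [lo, hi, i, hj, Fin.ext_iff]; omega
      · exact (lo_ne_hi j).symm
    · rw [map_mul, map_mul, hι, hι, mul_assoc, h3, ← mul_assoc,
        theta_conj i j (by unfold Nat.dist; simp [i, hj]), mul_assoc]

theorem theta_wd (hι : ∀ i : Fin (m + 1 - 1), ι (sPerm i) = σB i) (v : Perm (Fin (m + 1)))
    (i j : Fin (m + 1 - 1)) (h1 : v (lo i) = lo j) (h2 : v (hi i) = hi j) :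
    ι v * θB i = θB j * ι v := by
  let z : Fin (m + 1 - 1) := ⟨0, by have := i.2; omega⟩
  obtain ⟨g, g1, g2, g3⟩ := theta_std hι z rfl _ i rfl
  obtain ⟨f, f1, f2, f3⟩ := theta_std hι z rfl _ j rfl
  have key := fix_comm hι z rfl _ (f⁻¹ * v * g) rfl
    (by rw [Perm.mul_apply, Perm.mul_apply, g1, h1, Perm.inv_eq_iff_eq, f1])
    (by rw [Perm.mul_apply, Perm.mul_apply, g2, h2, Perm.inv_eq_iff_eq, f2])
  have e : v = f * (f⁻¹ * v * g) * g⁻¹ := by group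
  have g4 : ι g⁻¹ * θB i = θB z * ι g⁻¹ := by
    have : ι g⁻¹ * (ι g * θB z) * ι g⁻¹ = ι g⁻¹ * (θB i * ι g) * ι g⁻¹ := by rw [g3]
    rw [← mul_assoc, ← map_mul, inv_mul_cancel, map_one, one_mul, mul_assoc, mul_assoc, ← map_mul,
      mul_inv_cancel, map_one, mul_one] at this
    exact this.symm
  rw [e, map_mul ι _ g⁻¹, mul_assoc, g4, map_mul, ← mul_assoc, mul_assoc (ι f), key,
    ← mul_assoc, f3]
  simp only [mul_assoc]

open Classical in
noncomputable def thB (ι : Perm (Fin (m + 1)) →* BrauerMonoid (m + 1)) (a b : Fin (m + 1)) :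
    BrauerMonoid (m + 1) :=
  if h : ∃ p : Perm (Fin (m + 1)) × Fin (m + 1 - 1), p.1 (lo p.2) = a ∧ p.1 (hi p.2) = b then
    ι h.choose.1 * θB h.choose.2 * ι h.choose.1⁻¹ else 1

theorem thB_eq (hι : ∀ i : Fin (m + 1 - 1), ι (sPerm i) = σB i) (w : Perm (Fin (m + 1)))
    (i : Fin (m + 1 - 1)) : thB ι (w (lo i)) (w (hi i)) = ι w * θB i * ι w⁻¹ := by
  have h : ∃ p : Perm (Fin (m + 1)) × Fin (m + 1 - 1), p.1 (lo p.2) = w (lo i) ∧ p.1 (hi p.2) = w (hi i) :=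
    ⟨(w, i), rfl, rfl⟩
  rw [thB, dif_pos h]
  obtain ⟨h1, h2⟩ := h.choose_spec
  generalize h.choose = p at h1 h2
  obtain ⟨v, j⟩ := p
  simp only at h1 h2 ⊢
  have := theta_wd hι (w⁻¹ * v) j i (by rw [Perm.mul_apply, h1, Perm.inv_eq_iff_eq])
    (by rw [Perm.mul_apply, h2, Perm.inv_eq_iff_eq])
  have e : ι v = ι w * ι (w⁻¹ * v) := by rw [← map_mul]; congr 1; group
  rw [e, mul_assoc (ι w), this, ← mul_assoc, mul_assoc, ← map_mul]
  congr 2; group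

theorem thB_std (hι : ∀ i : Fin (m + 1 - 1), ι (sPerm i) = σB i) (i : Fin (m + 1 - 1)) :
    thB ι (lo i) (hi i) = θB i := by
  have := thB_eq hι 1 i
  simpa using this

theorem exists_std {a b : Fin (m + 1)} (h : a ≠ b) :
    ∃ (w : Perm (Fin (m + 1))) (i : Fin (m + 1 - 1)), w (lo i) = a ∧ w (hi i) = b := by
  have hm : 0 < m + 1 - 1 := by
    have h1 := a.2
    have h2 := b.2
    have h3 : a.1 ≠ b.1 := fun h' => h (Fin.ext h')
    omega
  obtain ⟨w, h1, h2⟩ := exists_perm2 (lo_ne_hi (n := m + 1) ⟨0, hm⟩) h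
  exact ⟨w, _, h1, h2⟩

theorem brData (hι : ∀ i : Fin (m + 1 - 1), ι (sPerm i) = σB i) : BrData ι (thB ι) := by
  have conj : ∀ (w : Perm (Fin (m + 1))) a b, a ≠ b → ι w * thB ι a b = thB ι (w a) (w b) * ι w := by
    intro w a b hab
    obtain ⟨v, i, rfl, rfl⟩ := exists_std hab
    rw [thB_eq hι, ← Perm.mul_apply, ← Perm.mul_apply, thB_eq hι, map_mul, mul_assoc _ _ (ι w),
      ← map_mul ι _ w]
    simp only [mul_assoc, mul_inv_rev, inv_mul_cancel, mul_one]
  have canc : ∀ (w : Perm (Fin (m + 1))) (x y : BrauerMonoid (m + 1)), x * ι w = y * ι w → x = y := by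
    intro w x y h
    have := congrArg (· * ι w⁻¹) h
    simpa [mul_assoc, ← map_mul] using this
  have csw : ∀ (w : Perm (Fin (m + 1))) a b, ι (swap (w a) (w b)) * ι w = ι w * ι (swap a b) := by
    intro w a b
    rw [← map_mul, ← map_mul]
    congr 1
    rw [Equiv.swap_apply_apply]; group
  have swl0 : ∀ i : Fin (m + 1 - 1), σB i * θB i = θB i := fun i => rel_eq (BrauerRel.sigma_theta i)
  refine ⟨⟨?_, conj, ?_, ?_, ?_, ?_⟩, ?_⟩
  · intro a b hab
    obtain ⟨v, i, rfl, rfl⟩ := exists_std hab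
    have h := thB_eq hι (v * sPerm i) i
    have e1 : sPerm i (lo i) = hi i := swap_apply_left _ _
    have e2 : sPerm i (hi i) = lo i := swap_apply_right _ _
    have e3 : (sPerm i)⁻¹ = sPerm i := swap_inv _ _
    have h1 : θB i * σB i = θB i := rel_eq (BrauerRel.theta_sigma i)
    rw [Perm.mul_apply, Perm.mul_apply, e1, e2, mul_inv_rev, e3, map_mul, map_mul, hι,
      mul_assoc (ι v), swl0, mul_assoc, ← mul_assoc (θB i), h1, ← mul_assoc] at h
    rw [h, thB_eq hι]
  · intro a b hab
    obtain ⟨v, i, rfl, rfl⟩ := exists_std hab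
    apply canc v
    have h1 : θB i * θB i = θB i := rel_eq (BrauerRel.theta_idem i)
    rw [mul_assoc, ← conj v _ _ (lo_ne_hi i), ← mul_assoc, ← conj v _ _ (lo_ne_hi i), thB_std hι,
      mul_assoc, h1]
  · intro a b hab
    obtain ⟨v, i, rfl, rfl⟩ := exists_std hab
    apply canc v
    rw [mul_assoc, ← conj v _ _ (lo_ne_hi i), ← mul_assoc, csw, mul_assoc, thB_std hι]
    congr 1
    rw [← sPerm, hι, swl0]
  · intro a b c d h1 h2 h3 h4 h5 h6
    have hm : 3 < m + 1 := by
      have k1 := a.2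
      have k2 := b.2
      have k3 := c.2
      have k4 := d.2
      simp only [ne_eq, Fin.ext_iff] at h1 h2 h3 h4 h5 h6
      omega
    let i : Fin (m + 1 - 1) := ⟨0, by omega⟩
    let j : Fin (m + 1 - 1) := ⟨2, by omega⟩
    obtain ⟨v, rfl, rfl, rfl, rfl⟩ := exists_perm4 (a := lo i) (b := hi i) (c := lo j) (d := hi j)
      (by simp [lo, hi, i, j]) ⟨h1, h2, h3, h4, h5, h6⟩
    apply canc v
    have k1 : θB i * θB j = θB j * θB i :=
      rel_eq (BrauerRel.theta_comm i j (by unfold Nat.dist; simp [i, j]))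
    rw [mul_assoc, ← conj v _ _ (lo_ne_hi j), ← mul_assoc, ← conj v _ _ (lo_ne_hi i), mul_assoc,
      mul_assoc, ← conj v _ _ (lo_ne_hi i), ← mul_assoc (thB ι (v (lo j)) (v (hi j))),
      ← conj v _ _ (lo_ne_hi j), mul_assoc,
      thB_std hι, thB_std hι, k1]
  · intro a b c h1 h2 h3
    have hm : 2 < m + 1 := by
      have k1 := a.2
      have k2 := b.2
      have k3 := c.2
      simp only [ne_eq, Fin.ext_iff] at h1 h2 h3
      omega
    let i : Fin (m + 1 - 1) := ⟨0, by omega⟩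
    let j : Fin (m + 1 - 1) := ⟨1, by omega⟩
    have e : lo j = hi i := by simp [lo, hi, i, j]
    have n1 : lo i ≠ hi j := by simp [lo, hi, i, j]
    have n2 : hi i ≠ hi j := by simp [hi, i, j]
    obtain ⟨v, rfl, rfl, rfl⟩ := exists_perm3 (a := lo i) (b := hi i) (c := hi j)
      ⟨lo_ne_hi i, n2, n1⟩ ⟨h1, h2, h3⟩
    apply canc v
    rw [mul_assoc, ← conj v _ _ n2, ← mul_assoc, ← conj v _ _ (lo_ne_hi i), mul_assoc,
      mul_assoc, ← conj v _ _ n2, ← mul_assoc (ι (swap _ _)), csw, mul_assoc]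
    congr 1
    have sw3 : swap (lo i) (hi j) = sPerm j * sPerm i * sPerm j := by
      rw [sPerm, sPerm, e, Equiv.swap_mul_swap_mul_swap (lo_ne_hi i) n1, swap_comm]
    have hd : Nat.dist j.1 i.1 = 1 := by unfold Nat.dist; simp [i, j]
    have k1 : σB j * θB i * θB j = σB i * θB j := rel_eq (BrauerRel.sigma_theta_theta j i hd)
    have k2 : σB j * σB j = 1 := rel_eq (BrauerRel.sigma_sq j)
    rw [sw3, ← e, thB_std hι, e, thB_std hι, map_mul, map_mul, hι, hι, mul_assoc, swl0, mul_assoc,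
      ← k1, mul_assoc, ← mul_assoc, k2, one_mul]
  · intro p p1 pw pt t
    have ht : t ∈ Submonoid.closure (Set.range (PresentedMonoid.of (BrauerRel (m + 1)))) := by
      rw [PresentedMonoid.closure_range_of]; trivial
    induction ht using Submonoid.closure_induction_right with
    | one => exact p1
    | mul_right x hx y hy ih =>
      obtain ⟨i | i, rfl⟩ := hy
      · have := pw x (sPerm i) ih
        rw [hι] at this
        exact this
      · have := pt x _ _ (lo_ne_hi i) ih
        rw [thB_std hι] at this
        exact this
end Data
end BrAux

namespace BrAux
/-! Part E: separation and counting -/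
section Sep
open Equiv
variable {m : ℕ}

abbrev YY (m : ℕ) := Fin (m + 1) ⊕ Fin (m + 1)

def cE (m : ℕ) : Perm (Fin (m + 1)) →* Function.End (MM (YY m)) :=
  cj.comp ((Perm.sumCongrHom (Fin (m + 1)) (Fin (m + 1))).comp (MonoidHom.inl _ _))

def thE (m : ℕ) (a b : Fin (m + 1)) : Function.End (MM (YY m)) := Th (Sum.inl a) (Sum.inl b)

theorem brAx_E (m : ℕ) : BrAx (cE m) (thE m) := by
  have il : ∀ {a b : Fin (m + 1)}, a ≠ b → (Sum.inl a : YY m) ≠ Sum.inl b :=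
    fun h h' => h (Sum.inl_injective h')
  have D := brAx_MM (Y := YY m)
  have hsw : ∀ a b, cE m (swap a b) = cj (swap (Sum.inl a) (Sum.inl b)) := by
    intro a b
    change cj (Perm.sumCongr (swap a b) 1) = _
    rw [Perm.sumCongr_swap_one]
  constructor
  · intro a b h; exact D.symm _ _ (il h)
  · intro w a b h; exact D.conj _ _ _ (il h)
  · intro a b h; exact D.sq _ _ (il h)
  · intro a b h; rw [hsw]; exact D.swl _ _ (il h)
  · intro a b c d h1 h2 h3 h4 h5 h6
    exact D.comm _ _ _ _ (il h1) (il h2) (il h3) (il h4) (il h5) (il h6)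
  · intro a b c h1 h2 h3; rw [hsw]; exact D.tril _ _ _ (il h1) (il h2) (il h3)

def AA (m : ℕ) : BrauerMonoid (m + 1) →* Function.End (MM (YY m)) :=
  PresentedMonoid.lift (genMap (cE m) (thE m)) (rel_of_brAx (brAx_E m))

variable {ι : Perm (Fin (m + 1)) →* BrauerMonoid (m + 1)}

theorem AA_iota (hι : ∀ i : Fin (m + 1 - 1), ι (sPerm i) = σB i) (w : Perm (Fin (m + 1))) :
    AA m (ι w) = cE m w := by
  have : (AA m).comp ι = cE m := by
    apply MonoidHom.eq_of_eqOn_denseM (Equiv.Perm.mclosure_swap_castSucc_succ m)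
    rintro _ ⟨i, rfl⟩
    change AA m (ι (sPerm (n := m + 1) i)) = _
    rw [hι]
    rfl
  exact DFunLike.congr_fun this w

theorem AA_th (hι : ∀ i : Fin (m + 1 - 1), ι (sPerm i) = σB i) {a b : Fin (m + 1)} (h : a ≠ b) :
    AA m (thB ι a b) = thE m a b := by
  obtain ⟨w, i, rfl, rfl⟩ := exists_std h
  rw [thB_eq hι, map_mul, map_mul, AA_iota hι, AA_iota hι]
  have : AA m (θB i) = thE m (lo i) (hi i) := rfl
  rw [this, (brAx_E m).conj _ _ _ (lo_ne_hi i), mul_assoc, ← map_mul, mul_inv_cancel, map_one, mul_one]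

def FA (α : Perm (Fin (m + 1))) : YY m → YY m :=
  Sum.elim (fun x => if α x = x then Sum.inr x else Sum.inl (α x))
    (fun x => if α x = x then Sum.inl x else Sum.inr (α x))

def f0 (m : ℕ) : MM (YY m) := ⟨FA 1, by rintro (x | x) <;> simp [FA]⟩

theorem AA_isE (hι : ∀ i : Fin (m + 1 - 1), ι (sPerm i) = σB i) {α : Perm (Fin (m + 1))}
    {t : BrauerMonoid (m + 1)} (h : IsE (thB ι) α t) : (AA m t (f0 m)).1 = FA α := by
  induction h with
  | one => rw [map_one]; rfl
  | @mul α t a b h hab ha hb ih =>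
    have il : (Sum.inl a : YY m) ≠ Sum.inl b := fun h' => hab (Sum.inl_injective h')
    rw [map_mul, end_mul, AA_th hι hab, thE, Th_val il, ih]
    have hα := h.invol
    have ia := fun x => α.injective.eq_iff (a := x) (b := a)
    have ib := fun x => α.injective.eq_iff (a := x) (b := b)
    rw [ha] at ia
    rw [hb] at ib
    funext x
    rcases x with x | x
    · have := ia x
      have := ib x
      simp only [tf, FA, Sum.elim_inl, Perm.mul_apply, swap_apply_def]
      grind
    · have := ia x
      have := ib x
      simp only [tf, FA, Sum.elim_inl, Sum.elim_inr, Perm.mul_apply, swap_apply_def]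
      grind

theorem AA_nf (hι : ∀ i : Fin (m + 1 - 1), ι (sPerm i) = σB i) {α u : Perm (Fin (m + 1))}
    {t : BrauerMonoid (m + 1)} (h : IsE (thB ι) α t) (x : Fin (m + 1)) :
    (AA m (ι u * t) (f0 m)).1 (Sum.inr x) = (if α x = x then Sum.inl (u x) else Sum.inr (α x)) ∧
    (AA m (ι u * t) (f0 m)).1 (Sum.inl (u x)) = (if α x = x then Sum.inr x else Sum.inl (u (α x))) := by
  rw [map_mul, end_mul, AA_iota hι]
  have e : ∀ y, (cE m u (AA m t (f0 m))).1 (Perm.sumCongr u 1 y) = Perm.sumCongr u 1 (FA α y) := by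
    intro y
    change (cj (Perm.sumCongr u 1) (AA m t (f0 m))).1 _ = _
    rw [cj_val, AA_isE hι h]
    congr 2
    exact Equiv.symm_apply_apply _ _
  constructor
  · refine (e (Sum.inr x)).trans ?_
    simp only [FA, Sum.elim_inr]
    split_ifs <;> rfl
  · refine (e (Sum.inl x)).trans ?_
    simp only [FA, Sum.elim_inl]
    split_ifs <;> rfl

theorem separate (hι : ∀ i : Fin (m + 1 - 1), ι (sPerm i) = σB i) {α β u v : Perm (Fin (m + 1))}
    {t s : BrauerMonoid (m + 1)} (h : IsE (thB ι) α t) (k : IsE (thB ι) β s)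
    (e : ι u * t = ι v * s) : α = β ∧ u⁻¹ * v ∈ HH α := by
  have h1 := AA_nf hι (u := u) h
  have k1 := AA_nf hι (u := v) k
  rw [← e] at k1
  have hab : α = β := by
    ext1 x
    have := (h1 x).1.symm.trans (k1 x).1
    split_ifs at this with p q q
    · rw [p, q]
    · exact Sum.inr_injective this
  subst hab
  have hfix : ∀ x, α x = x → (u⁻¹ * v) x = x := by
    intro x hx
    have := (h1 x).1.symm.trans (k1 x).1
    rw [if_pos hx, if_pos hx] at this
    rw [Perm.mul_apply, Perm.inv_eq_iff_eq]
    exact (Sum.inl_injective this).symm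
  refine ⟨rfl, ?_, hfix⟩
  intro x
  by_cases hx : α x = x
  · rw [hx, hfix x hx, hx]
  · have h2 := (h1 ((u⁻¹ * v) x)).2
    have h3 := (k1 x).2
    have e1 : u ((u⁻¹ * v) x) = v x := by
      rw [Perm.mul_apply]; exact Equiv.apply_symm_apply _ _
    rw [e1, h3, if_neg hx] at h2
    split_ifs at h2 with p
    · rw [Perm.mul_apply, Perm.inv_eq_iff_eq]
      exact Sum.inl_injective h2

theorem cyc_invol {n : ℕ} (α : Perm (Fin n)) : (∀ x, α (α x) = x) ↔
    α.cycleType = Multiset.replicate (Multiset.card α.cycleType) 2 := by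
  constructor
  · intro h
    rw [Multiset.eq_replicate]
    refine ⟨rfl, fun b hb => ?_⟩
    have h1 := Perm.two_le_of_mem_cycleType hb
    have h2 := Perm.dvd_of_mem_cycleType hb
    have h3 : orderOf α ∣ 2 := by
      rw [orderOf_dvd_iff_pow_eq_one, pow_two]
      ext1 x; exact h x
    have := Nat.le_of_dvd (by norm_num) (h2.trans h3)
    omega
  · intro h x
    have h3 : orderOf α ∣ 2 := by
      rw [← Perm.lcm_cycleType, Multiset.lcm_dvd, h]
      intro b hb
      rw [Multiset.eq_of_mem_replicate hb]
    rw [orderOf_dvd_iff_pow_eq_one, pow_two] at h3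
    exact DFunLike.congr_fun h3 x

theorem rep_prod (k : ℕ) : ∏ j ∈ (Multiset.replicate k 2).toFinset,
    ((Multiset.replicate k 2).count j).factorial = k.factorial := by
  rcases Nat.eq_zero_or_pos k with rfl | hk
  · simp
  · rw [Multiset.toFinset_replicate, if_neg hk.ne']
    simp

theorem card_HH {n : ℕ} (α : Perm (Fin n)) (k : ℕ) (h : α.cycleType = Multiset.replicate k 2) :
    Nat.card (HH α) = 2 ^ k * k.factorial := by
  let p : Fin n → Prop := fun x => α x ≠ x
  have hp : ∀ x, p (α x) ↔ p x := fun x => by simp [p]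
  let β : Perm {x // p x} := α.subtypePerm hp
  have hβ : Perm.ofSubtype β = α := Perm.ofSubtype_subtypePerm hp (fun x hx => hx)
  have hmap : HH α = (Subgroup.centralizer {β}).map (Perm.ofSubtype) := by
    ext w
    constructor
    · rintro ⟨h1, h2⟩
      have hw : ∀ x, p (w x) ↔ p x := by
        intro x
        simp only [p, ← h1]
        simp
      refine ⟨w.subtypePerm hw, ?_, Perm.ofSubtype_subtypePerm hw (fun x hx hx' => hx (h2 x hx'))⟩
      rw [SetLike.mem_coe, Subgroup.mem_centralizer_singleton_iff]
      apply Equiv.ext; intro x; apply Subtype.ext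
      first | exact h1 x | exact (h1 x).symm
    · rintro ⟨g, hg, rfl⟩
      rw [SetLike.mem_coe, Subgroup.mem_centralizer_singleton_iff] at hg
      have := congrArg Perm.ofSubtype hg
      rw [map_mul, map_mul, hβ] at this
      refine ⟨fun x => DFunLike.congr_fun this x, fun x hx => ?_⟩
      exact Perm.ofSubtype_apply_of_not_mem g (by simpa [p] using hx)
  have hc : β.cycleType = Multiset.replicate k 2 := by
    have h5 := Perm.cycleType_ofSubtype (g := β)
    exact h5.symm.trans ((congrArg Perm.cycleType hβ).trans h)
  have hcard : Fintype.card {x // p x} = 2 * k := by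
    have h1 := Perm.sum_cycleType α
    rw [h, Multiset.sum_replicate, smul_eq_mul] at h1
    rw [Fintype.card_subtype, mul_comm, h1]
    rfl
  rw [hmap, Subgroup.card_map_of_injective Perm.ofSubtype_injective, Perm.nat_card_centralizer, hc,
    rep_prod, hcard, Multiset.sum_replicate, Multiset.prod_replicate, smul_eq_mul, mul_comm k 2,
    Nat.sub_self, Nat.factorial_zero, one_mul]

end Sep
end BrAux

theorem brauer_card_eq (n : ℕ) (hn : 1 ≤ n) :
    Finite (BrauerMonoid n) ∧
      Nat.card (BrauerMonoid n) =
        ∑ k ∈ Finset.range (n / 2 + 1),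
          n.factorial ^ 2 / (2 ^ (2 * k) * k.factorial ^ 2 * (n - 2 * k).factorial) := by
  classical
  obtain ⟨m, rfl⟩ : ∃ m, n = m + 1 := ⟨n - 1, by omega⟩
  obtain ⟨ι, hι⟩ := BrAux.exists_iota m
  have D := BrAux.brData hι
  let P := Equiv.Perm (Fin (m + 1))
  let I := {α : P // ∀ x, α (α x) = x}
  have hE : ∀ α : I, ∃ t, BrAux.IsE (BrAux.thB ι) α.1 t :=
    fun α => BrAux.exists_isE _ _ α.1 rfl α.2
  choose E hE using hE
  let Ψ : (Σ α : I, P ⧸ BrAux.HH α.1) → BrauerMonoid (m + 1) := fun p => ι p.2.out * E p.1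
  have hbij : Function.Bijective Ψ := by
    constructor
    · rintro ⟨α, q⟩ ⟨β, r⟩ h
      obtain ⟨h1, h2⟩ := BrAux.separate hι (hE α) (hE β) h
      obtain rfl : α = β := Subtype.ext h1
      have := QuotientGroup.eq.2 h2
      rw [QuotientGroup.out_eq', QuotientGroup.out_eq'] at this
      have this' : q = r := this
      rw [this']
    · intro x
      obtain ⟨u, α, t, ht, rfl⟩ := BrAux.normal_form D x
      let α' : I := ⟨α, ht.invol⟩
      refine ⟨⟨α', (u : P ⧸ BrAux.HH α)⟩, ?_⟩
      obtain ⟨h, hh⟩ := QuotientGroup.mk_out_eq_mul (BrAux.HH α) u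
      change ι (Quotient.out (u : P ⧸ BrAux.HH α)) * E α' = ι u * t
      rw [hh, map_mul, mul_assoc, (hE α').absH D _ h.1 h.2 rfl, (hE α').uniq D ht]
  let e := Equiv.ofBijective Ψ hbij
  refine ⟨Finite.of_equiv _ e, ?_⟩
  rw [← Nat.card_congr e, Nat.card_sigma]
  let c : P → ℕ := fun α => Multiset.card α.cycleType
  have hq : ∀ α : I, Nat.card (P ⧸ BrAux.HH α.1) =
      (m + 1).factorial / (2 ^ c α.1 * (c α.1).factorial) := by
    intro α
    have h1 := BrAux.card_HH α.1 (c α.1) ((BrAux.cyc_invol α.1).1 α.2)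
    have h2 := Subgroup.card_eq_card_quotient_mul_card_subgroup (BrAux.HH α.1)
    rw [h1, Nat.card_eq_fintype_card, Fintype.card_perm, Fintype.card_fin] at h2
    rw [h2, Nat.mul_div_cancel _ (by positivity)]
  rw [Finset.sum_congr rfl (fun α _ => hq α)]
  have hs : ∀ α : P, c α * 2 ≤ m + 1 ∨ ¬ ∀ x, α (α x) = x := by
    intro α
    by_cases h : ∀ x, α (α x) = x
    · left
      have h1 := Equiv.Perm.sum_cycleType α
      rw [(BrAux.cyc_invol α).1 h, Multiset.sum_replicate, smul_eq_mul] at h1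
      change Multiset.card α.cycleType * 2 ≤ _
      rw [h1]
      exact (Finset.card_le_univ _).trans (by simp)
    · right; exact h
  have h3 : ∑ α : I, (m + 1).factorial / (2 ^ c α.1 * (c α.1).factorial) =
      ∑ α ∈ Finset.univ.filter (fun α : P => ∀ x, α (α x) = x),
        (m + 1).factorial / (2 ^ c α * (c α).factorial) := by
    rw [Finset.sum_subtype (p := fun α : P => ∀ x, α (α x) = x)]
    intro x; simp
  rw [h3, ← Finset.sum_fiberwise_of_maps_to (t := Finset.range ((m + 1) / 2 + 1)) (g := c)]
  swap
  · intro α hα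
    rw [Finset.mem_filter] at hα
    rcases hs α with h | h
    · rw [Finset.mem_range]; omega
    · exact absurd hα.2 h
  apply Finset.sum_congr rfl
  intro k hk
  rw [Finset.mem_range] at hk
  have hf : (Finset.univ.filter (fun α : P => ∀ x, α (α x) = x)).filter (fun α => c α = k) =
      Finset.univ.filter (fun α : P => α.cycleType = Multiset.replicate k 2) := by
    ext α
    simp only [Finset.mem_filter, Finset.mem_univ, true_and]
    constructor
    · rintro ⟨h1, rfl⟩
      exact (BrAux.cyc_invol α).1 h1
    · intro h
      have : c α = k := by simp [c, h]
      refine ⟨(BrAux.cyc_invol α).2 ?_, this⟩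
      change _ = Multiset.replicate (c α) 2
      rw [this, h]
  rw [hf, Finset.sum_congr rfl (g := fun _ => (m + 1).factorial / (2 ^ k * k.factorial))]
  swap
  · intro α hα
    rw [Finset.mem_filter] at hα
    have : c α = k := by simp [c, hα.2]
    rw [this]
  rw [Finset.sum_const, smul_eq_mul]
  have h4 := Equiv.Perm.card_of_cycleType_mul_eq (α := Fin (m + 1)) (Multiset.replicate k 2)
  rw [if_pos, BrAux.rep_prod, Multiset.sum_replicate, Multiset.prod_replicate, Fintype.card_fin,
    smul_eq_mul, mul_comm k 2] at h4
  swap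
  · constructor
    · rw [Multiset.sum_replicate, smul_eq_mul, Fintype.card_fin]; omega
    · intro a ha; rw [Multiset.eq_of_mem_replicate ha]
  have hdvd : 2 ^ k * k.factorial ∣ (m + 1).factorial := by
    refine ⟨Finset.card (Finset.univ.filter (fun α : P => α.cycleType = Multiset.replicate k 2)) *
      (m + 1 - 2 * k).factorial, ?_⟩
    rw [← h4]; ring
  obtain ⟨q, hq'⟩ := hdvd
  rw [hq', Nat.mul_div_cancel_left _ (by positivity), ← hq']
  symm
  apply Nat.div_eq_of_eq_mul_left (by positivity)
  rw [pow_two ((m + 1).factorial)]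
  nth_rewrite 1 [← h4]
  rw [hq']
  ring
end

section
/- Fix k ∈ {0,…,n}. Consider the fixed-point-free involutions f of Fin n ⊕ Fin n (permutations with f∘f = id and f(x) ≠ x for all x) such that exactly k elements i of the left copy satisfy that f(inl i) lies in the right copy. If n−k is odd, there are no such involutions; if n−k = 2l is even, their number equals (n!)² / (2^{2l}·(l!)²·k!) (an exact natural-number division). -/
namespace BrauerAux

open Equiv Function

/-- involutions with `k` fixed points -/
abbrev Inv (n k : ℕ) : Type :=
  {g : Perm (Fin n) // g * g = 1 ∧ Fintype.card {i // g i = i} = k}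

/-- the set of fixed-point-free involutions of rank `k` -/
abbrev S (n k : ℕ) : Set (Perm (Fin n ⊕ Fin n)) :=
  {f : Equiv.Perm (Fin n ⊕ Fin n) | f * f = 1 ∧ (∀ x, f x ≠ x) ∧
          (Finset.univ.filter fun i : Fin n => (f (Sum.inl i)).isRight = true).card = k}

lemma inv_iff {α : Type*} (g : Perm α) : g * g = 1 ↔ ∀ x, g (g x) = x := by
  rw [Equiv.ext_iff]; rfl

lemma cyc {n k : ℕ} (hk : k ≤ n) (g : Perm (Fin n)) :
    (g * g = 1 ∧ Fintype.card {i // g i = i} = k) ↔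
      ∃ l, n - k = 2 * l ∧ g.cycleType = Multiset.replicate l 2 := by
  have h1 : g.cycleType.sum + Fintype.card {i // g i = i} = n := by
    rw [Perm.sum_cycleType, Fintype.card_subtype]
    have := Finset.card_filter_add_card_filter_not (s := (Finset.univ : Finset (Fin n)))
      (fun i => g i = i)
    rw [Finset.card_univ, Fintype.card_fin] at this
    rw [add_comm]
    exact this
  have h2 : g * g = 1 ↔ ∀ c ∈ g.cycleType, c = 2 := by
    rw [← pow_two, Perm.pow_prime_eq_one_iff]
  rw [h2, ← Multiset.eq_replicate_card]
  constructor
  · rintro ⟨a, b⟩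
    refine ⟨_, ?_, a⟩
    rw [a, Multiset.sum_replicate] at h1
    simp at h1
    omega
  · rintro ⟨l, a, b⟩
    rw [b, Multiset.sum_replicate] at h1
    simp at h1
    refine ⟨by rw [b]; simp, by omega⟩

lemma card_Inv {n k l : ℕ} (hk : k ≤ n) (h : n - k = 2 * l) :
    Fintype.card (Inv n k) * (k.factorial * 2 ^ l * l.factorial) = n.factorial := by
  have := Perm.card_of_cycleType_mul_eq (Fin n) (Multiset.replicate l 2)
  rw [if_pos ⟨by simp; omega, fun a ha => (Multiset.eq_of_mem_replicate ha).ge⟩] at this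
  have e : Fintype.card (Fin n) - (Multiset.replicate l 2).sum = k := by simp; omega
  rw [e] at this
  have e2 : (∏ m ∈ (Multiset.replicate l 2).toFinset, ((Multiset.replicate l 2).count m).factorial)
      = l.factorial := by
    rcases l.eq_zero_or_pos with rfl | hl
    · simp
    · rw [Multiset.toFinset_replicate, if_neg hl.ne']; simp
  rw [e2, Multiset.prod_replicate, Fintype.card_fin] at this
  rw [← this, Fintype.card_subtype]
  congr 2
  ext g
  simp only [Finset.mem_filter, Finset.mem_univ, true_and]
  rw [cyc hk]
  constructor
  · rintro ⟨l', a, b⟩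
    obtain rfl : l = l' := by omega
    exact b
  · intro b; exact ⟨l, h, b⟩

/-- left part -/
def gL {n : ℕ} (f : Perm (Fin n ⊕ Fin n)) (i : Fin n) : Fin n :=
  (f (Sum.inl i)).elim id (fun _ => i)

/-- right part -/
def gR {n : ℕ} (f : Perm (Fin n ⊕ Fin n)) (i : Fin n) : Fin n :=
  (f (Sum.inr i)).elim (fun _ => i) id

lemma gL_inv {n : ℕ} (f : Perm (Fin n ⊕ Fin n)) (hf : ∀ x, f (f x) = x) : Involutive (gL f) := by
  intro i
  have := hf (Sum.inl i)
  unfold gL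
  rcases h : f (Sum.inl i) with j | j
  · rw [h] at this; simp [this]
  · simp [h]

lemma gR_inv {n : ℕ} (f : Perm (Fin n ⊕ Fin n)) (hf : ∀ x, f (f x) = x) : Involutive (gR f) := by
  intro i
  have := hf (Sum.inr i)
  unfold gR
  rcases h : f (Sum.inr i) with j | j
  · simp [h]
  · rw [h] at this; simp [this]

lemma gL_fix {n : ℕ} (f : Perm (Fin n ⊕ Fin n)) (hf : ∀ x, f x ≠ x) (i : Fin n) :
    gL f i = i ↔ (f (Sum.inl i)).isRight = true := by
  have := hf (Sum.inl i)
  unfold gL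
  rcases h : f (Sum.inl i) with j | j
  · rw [h] at this; simpa using this
  · simp

lemma gR_fix {n : ℕ} (f : Perm (Fin n ⊕ Fin n)) (hf : ∀ x, f x ≠ x) (i : Fin n) :
    gR f i = i ↔ (f (Sum.inr i)).isLeft = true := by
  have := hf (Sum.inr i)
  unfold gR
  rcases h : f (Sum.inr i) with j | j
  · simp
  · rw [h] at this; simpa using this

/-- the glued function -/
def glue {n : ℕ} (g h : Perm (Fin n)) (e : {i // g i = i} ≃ {i // h i = i}) :
    Fin n ⊕ Fin n → Fin n ⊕ Fin n
  | Sum.inl i => if hi : g i = i then Sum.inr (e ⟨i, hi⟩) else Sum.inl (g i)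
  | Sum.inr i => if hi : h i = i then Sum.inl (e.symm ⟨i, hi⟩) else Sum.inr (h i)

lemma glue_inv {n : ℕ} (g h : Perm (Fin n)) (hg : ∀ x, g (g x) = x) (hh : ∀ x, h (h x) = x)
    (e : {i // g i = i} ≃ {i // h i = i}) : Involutive (glue g h e) := by
  rintro (i | i)
  · by_cases hi : g i = i
    · have := (e ⟨i, hi⟩).2
      simp [glue, hi, this]
    · simp [glue, hi, hg, Ne.symm hi]
  · by_cases hi : h i = i
    · have := (e.symm ⟨i, hi⟩).2
      simp [glue, hi, this]
    · simp [glue, hi, hh, Ne.symm hi]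

/-- the data -/
abbrev D (n k : ℕ) : Type :=
  Σ p : Inv n k × Inv n k, ({i // p.1.1 i = i} ≃ {i // p.2.1 i = i})

/-- the map -/
def Phi (n k : ℕ) (d : D n k) : S n k :=
  ⟨(glue_inv d.1.1.1 d.1.2.1 ((inv_iff _).1 d.1.1.2.1) ((inv_iff _).1 d.1.2.2.1) d.2).toPerm, by
    obtain ⟨⟨⟨g, hg, hgk⟩, ⟨h, hh, hhk⟩⟩, e⟩ := d
    dsimp only at e ⊢
    refine ⟨?_, ?_, ?_⟩
    · rw [inv_iff]
      exact glue_inv g h ((inv_iff _).1 hg) ((inv_iff _).1 hh) e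
    · rintro (i | i)
      · by_cases hi : g i = i <;> simp [glue, hi]
      · by_cases hi : h i = i <;> simp [glue, hi]
    · refine Eq.trans ?_ hgk
      refine Eq.trans ?_ (Fintype.card_subtype (fun i => g i = i)).symm
      congr 1
      ext i
      refine Finset.mem_filter.trans (Iff.trans ?_ Finset.mem_filter.symm)
      by_cases hi : g i = i <;> simp [glue, hi]⟩

lemma Phi_inj (n k : ℕ) : Injective (Phi n k) := by
  rintro ⟨⟨⟨g, hg, hgk⟩, ⟨h, hh, hhk⟩⟩, e⟩ ⟨⟨⟨g', hg', hgk'⟩, ⟨h', hh', hhk'⟩⟩, e'⟩ H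
  dsimp only at e e'
  have H1 : ∀ x, glue g h e x = glue g' h' e' x := fun x =>
    congrFun (congrArg (fun f : S n k => (f.1 : Fin n ⊕ Fin n → Fin n ⊕ Fin n)) H) x
  obtain rfl : g = g' := by
    ext i
    have := H1 (Sum.inl i)
    by_cases hi : g i = i <;> by_cases hi' : g' i = i <;> simp [glue, hi, hi'] at this ⊢
    rw [this]
  obtain rfl : h = h' := by
    ext i
    have := H1 (Sum.inr i)
    by_cases hi : h i = i <;> by_cases hi' : h' i = i <;> simp [glue, hi, hi'] at this ⊢
    rw [this]
  obtain rfl : e = e' := by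
    ext ⟨i, hi⟩
    have := H1 (Sum.inl i)
    simp [glue, hi] at this
    rw [this]
  rfl

/-- left part as a permutation -/
def pL {n k : ℕ} (f : S n k) : Inv n k :=
  ⟨(gL_inv f.1 ((inv_iff _).1 f.2.1)).toPerm, by
    rw [inv_iff]; exact gL_inv f.1 ((inv_iff _).1 f.2.1), by
    rw [Fintype.card_subtype]
    refine Eq.trans ?_ f.2.2.2
    congr 1
    ext i
    simp [gL_fix f.1 f.2.2.1]⟩

/-- the crossing map -/
def cr {n k : ℕ} (f : S n k) : {i // gL f.1 i = i} ≃ {i // gR f.1 i = i} where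
  toFun i := ⟨(f.1 (Sum.inl i)).elim id id, by
    obtain ⟨i, hi⟩ := i
    rw [gL_fix f.1 f.2.2.1, Sum.isRight_iff] at hi
    obtain ⟨j, hj⟩ := hi
    have := (inv_iff _).1 f.2.1 (Sum.inl i)
    rw [hj] at this
    simp [hj, gR, this]⟩
  invFun i := ⟨(f.1 (Sum.inr i)).elim id id, by
    obtain ⟨i, hi⟩ := i
    rw [gR_fix f.1 f.2.2.1, Sum.isLeft_iff] at hi
    obtain ⟨j, hj⟩ := hi
    have := (inv_iff _).1 f.2.1 (Sum.inr i)
    rw [hj] at this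
    simp [hj, gL, this]⟩
  left_inv := by
    rintro ⟨i, hi⟩
    rw [gL_fix f.1 f.2.2.1, Sum.isRight_iff] at hi
    obtain ⟨j, hj⟩ := hi
    have := (inv_iff _).1 f.2.1 (Sum.inl i)
    rw [hj] at this
    simp [hj, this]
  right_inv := by
    rintro ⟨i, hi⟩
    rw [gR_fix f.1 f.2.2.1, Sum.isLeft_iff] at hi
    obtain ⟨j, hj⟩ := hi
    have := (inv_iff _).1 f.2.1 (Sum.inr i)
    rw [hj] at this
    simp [hj, this]

/-- right part as a permutation -/
def pR {n k : ℕ} (f : S n k) : Inv n k :=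
  ⟨(gR_inv f.1 ((inv_iff _).1 f.2.1)).toPerm, by
    rw [inv_iff]; exact gR_inv f.1 ((inv_iff _).1 f.2.1), by
    refine Eq.trans ?_ (pL f).2.2
    exact (Fintype.card_congr (cr f)).symm⟩

lemma Phi_surj (n k : ℕ) : Surjective (Phi n k) := by
  intro f
  refine ⟨⟨⟨pL f, pR f⟩, cr f⟩, ?_⟩
  apply Subtype.ext
  apply Equiv.ext
  have hne := f.2.2.1
  rintro (i | i)
  · change glue (pL f).1 (pR f).1 (cr f) (Sum.inl i) = _
    have h0 : (pL f).1 i = gL f.1 i := rfl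
    have h1 := gL_fix f.1 hne i
    rcases h : f.1 (Sum.inl i) with j | j
    · have h2 : gL f.1 i = j := by simp [gL, h]
      rw [h] at h1
      simp only [Sum.isRight_inl, Bool.false_eq_true, iff_false] at h1
      refine (dif_neg (by rwa [h0])).trans ?_
      rw [h0, h2]
    · rw [h] at h1
      refine (dif_pos (by rw [h0, h1]; rfl)).trans ?_
      change Sum.inr (Sum.elim id id (f.1 (Sum.inl i))) = _
      rw [h]; rfl
  · change glue (pL f).1 (pR f).1 (cr f) (Sum.inr i) = _
    have h0 : (pR f).1 i = gR f.1 i := rfl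
    have h1 := gR_fix f.1 hne i
    rcases h : f.1 (Sum.inr i) with j | j
    · rw [h] at h1
      refine (dif_pos (by rw [h0, h1]; rfl)).trans ?_
      change Sum.inl (Sum.elim id id (f.1 (Sum.inr i))) = _
      rw [h]; rfl
    · have h2 : gR f.1 i = j := by simp [gR, h]
      rw [h] at h1
      simp only [Sum.isLeft_inr, Bool.false_eq_true, iff_false] at h1
      refine (dif_neg (by rwa [h0])).trans ?_
      rw [h0, h2]

lemma card_S (n k : ℕ) : Nat.card (S n k) = Fintype.card (Inv n k) ^ 2 * k.factorial := by
  rw [← Nat.card_congr (Equiv.ofBijective (Phi n k) ⟨Phi_inj n k, Phi_surj n k⟩),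
    Nat.card_eq_fintype_card, Fintype.card_sigma]
  have : ∀ p : Inv n k × Inv n k,
      Fintype.card ({i // p.1.1 i = i} ≃ {i // p.2.1 i = i}) = k.factorial := by
    intro p
    rw [Fintype.card_equiv (Fintype.equivOfCardEq (p.1.2.2.trans p.2.2.2.symm)), p.1.2.2]
  rw [Finset.sum_congr rfl (fun p _ => this p)]
  simp only [Finset.sum_const, Finset.card_univ, Fintype.card_prod, smul_eq_mul, pow_two]

end BrauerAux

/-- Proposition `comb`(b) of Kudryavtseva–Mazorchuk: elements of the Brauer monoid `𝔅_n`
are fixed-point-free involutions of `Fin n ⊕ Fin n`, and the rank is the number of blocks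
meeting both copies.  For `k ≤ n`, if `n - k` is odd there are no elements of rank `k`,
and if `n - k = 2l` their number is `(n!)² / (2^{2l} (l!)² k!)`. -/
theorem card_brauer_rank (n k : ℕ) (hk : k ≤ n) :
    (Odd (n - k) →
      {f : Equiv.Perm (Fin n ⊕ Fin n) | f * f = 1 ∧ (∀ x, f x ≠ x) ∧
        (Finset.univ.filter fun i : Fin n => (f (Sum.inl i)).isRight = true).card = k} = ∅) ∧
    (∀ l : ℕ, n - k = 2 * l →
      Nat.card {f : Equiv.Perm (Fin n ⊕ Fin n) | f * f = 1 ∧ (∀ x, f x ≠ x) ∧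
          (Finset.univ.filter fun i : Fin n => (f (Sum.inl i)).isRight = true).card = k} =
        n.factorial ^ 2 / (2 ^ (2 * l) * l.factorial ^ 2 * k.factorial)) := by
  refine ⟨fun hodd => ?_, fun l hl => ?_⟩
  · rw [Set.eq_empty_iff_forall_notMem]
    intro f hf
    obtain ⟨l, h, -⟩ := (BrauerAux.cyc hk _).1 (BrauerAux.pL (⟨f, hf⟩ : BrauerAux.S n k)).2
    rw [h] at hodd
    exact (Nat.not_odd_iff_even.2 (even_two_mul l)) hodd
  · refine (BrauerAux.card_S n k).trans ?_
    symm
    apply Nat.div_eq_of_eq_mul_left (by positivity)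
    rw [← BrauerAux.card_Inv hk hl]
    ring
end

section
/- Let m_1,…,m_n be non-negative integers with Σ_{i=1}^n i·m_i = n. The number of partitions of Fin n ⊕ Fin n such that every block B contains equally many elements of the left copy as of the right copy, and such that for each i ∈ {1,…,n} exactly m_i blocks contain precisely i elements of the left copy, equals (n!)² / Π_{i=1}^n (m_i!·(i!)^{2m_i}) (an exact natural-number division). -/
open Finset in
lemma ITaux_card_equiv_over {α β κ : Type*} [Finite α] [Finite β] (f : α → κ) (g : β → κ)
    (h : ∀ k, Nat.card {a // f a = k} = Nat.card {b // g b = k})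
    (S : Finset κ) (hS : ∀ b, g b ∈ S) :
    Nat.card {e : α ≃ β // g ∘ e = f} = ∏ k ∈ S, (Nat.card {b // g b = k}).factorial := by
  classical
  cases nonempty_fintype β
  have e0 : ∀ k, Nonempty ({a // f a = k} ≃ {b // g b = k}) := fun k => by
    cases nonempty_fintype α
    exact ⟨Fintype.equivOfCardEq (by simpa [Nat.card_eq_fintype_card] using h k)⟩
  let E : α ≃ β := Equiv.ofFiberEquiv fun k => (e0 k).some
  have hE : ∀ a, g (E a) = f a := fun a => Equiv.ofFiberEquiv_map _ a
  have hc : Nat.card {e : α ≃ β // g ∘ e = f} = Nat.card {σ : Equiv.Perm β // g ∘ σ = g} := by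
    refine Nat.card_congr ((Equiv.equivCongr E (Equiv.refl β)).subtypeEquiv ?_)
    intro e
    constructor
    · intro h; funext b
      have := congrFun h (E.symm b)
      have h2 := hE (E.symm b)
      simp at this h2 ⊢
      rw [this, h2]
    · intro h; funext a
      have := congrFun h (E a)
      simp at this ⊢
      rw [this, hE]
  rw [hc, Nat.card_eq_fintype_card, DomMulAct.stabilizer_card']
  simp only [← Nat.card_eq_fintype_card]
  refine prod_subset ?_ ?_
  · intro k; simp only [mem_image]; rintro ⟨b, _, rfl⟩; exact hS b
  · intro k _ hk
    have : IsEmpty {b // g b = k} := ⟨fun b => hk (by simp [← b.2])⟩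
    simp

lemma ITaux_card_fun {n : ℕ} {K : Type*} [Fintype K] (s : K → ℕ) (hs : ∑ k, s k = n) :
    Nat.card {f : Fin n → K // ∀ k, Nat.card {a // f a = k} = s k} * ∏ k, (s k).factorial
      = n.factorial := by
  classical
  have hfib : ∀ k, Nat.card {b : Σ k, Fin (s k) // b.1 = k} = s k := fun k => by
    rw [Nat.card_congr (Equiv.sigmaSubtype k)]; simp
  have h1 : Nat.card (Fin n ≃ Σ k, Fin (s k)) = n.factorial := by
    rw [Nat.card_eq_fintype_card, Fintype.card_equiv (Fintype.equivOfCardEq (by simp [hs]))]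
    simp
  let φ : (Fin n ≃ Σ k, Fin (s k)) →
      {f : Fin n → K // ∀ k, Nat.card {a // f a = k} = s k} := fun e =>
    ⟨fun a => (e a).1, fun k => by
      rw [← hfib k]
      exact Nat.card_congr (e.subtypeEquiv fun a => Iff.rfl)⟩
  rw [← h1, ← Nat.card_congr (Equiv.sigmaFiberEquiv φ), Nat.card_sigma]
  rw [Finset.sum_congr rfl (g := fun _ => ∏ k, (s k).factorial)]
  · simp
  · intro f _
    have := ITaux_card_equiv_over f.1 (Sigma.fst : (Σ k, Fin (s k)) → K)
      (fun k => by rw [f.2, hfib]) Finset.univ (by simp)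
    simp only [hfib] at this
    rw [← this]
    refine Nat.card_congr (Equiv.subtypeEquivRight fun e => ?_)
    simp only [φ, Subtype.ext_iff]; rfl

def ITL {n : ℕ} (B : Finset (Fin n ⊕ Fin n)) : ℕ := (B.filter fun x => x.isLeft = true).card
def ITR {n : ℕ} (B : Finset (Fin n ⊕ Fin n)) : ℕ := (B.filter fun x => x.isRight = true).card

open Classical in
def ITF (n : ℕ) {K : Type*} (s : K → ℕ) : Type _ :=
  {f : Fin n ⊕ Fin n → K // ∀ k, ITL (Finset.univ.filter fun x => f x = k) = s k ∧
    ITR (Finset.univ.filter fun x => f x = k) = s k}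

def ITGood (n : ℕ) {K : Type*} (s : K → ℕ) : Type _ :=
  {P : Finpartition (Finset.univ : Finset (Fin n ⊕ Fin n)) //
    (∀ B ∈ P.parts, ITL B = ITR B) ∧
    ∀ i, Nat.card {B : P.parts // ITL B.1 = i} = Nat.card {k // s k = i}}

lemma ITaux_cardF {n : ℕ} {K : Type*} [Fintype K] (s : K → ℕ) (hs : ∑ k, s k = n) :
    Nat.card (ITF n s) * (∏ k, (s k).factorial) ^ 2 = n.factorial ^ 2 := by
  classical
  have : Nat.card (ITF n s) =
      Nat.card ({f : Fin n → K // ∀ k, Nat.card {a // f a = k} = s k} ×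
        {f : Fin n → K // ∀ k, Nat.card {a // f a = k} = s k}) := by
    have e1 := (Equiv.sumArrowEquivProdArrow (Fin n) (Fin n) K).subtypeEquiv
      (p := fun f => ∀ k, ITL (Finset.univ.filter fun x => f x = k) = s k ∧
        ITR (Finset.univ.filter fun x => f x = k) = s k)
      (q := fun c => (∀ k, Nat.card {a // c.1 a = k} = s k) ∧
        (∀ k, Nat.card {a // c.2 a = k} = s k)) (by
        intro f
        rw [← forall_and]
        refine forall_congr' fun k => ?_
        have hl : ITL (Finset.univ.filter fun x => f x = k) =
            Nat.card {a // f (Sum.inl a) = k} := by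
          have h0 : ((Finset.univ.filter fun x => f x = k).filter fun x => x.isLeft = true) =
              (Finset.univ.filter fun a => f (Sum.inl a) = k).map Function.Embedding.inl := by
            ext x; cases x <;> simp
          rw [ITL, h0, Finset.card_map, Nat.card_eq_fintype_card, Fintype.card_subtype]
        have hr : ITR (Finset.univ.filter fun x => f x = k) =
            Nat.card {a // f (Sum.inr a) = k} := by
          have h0 : ((Finset.univ.filter fun x => f x = k).filter fun x => x.isRight = true) =
              (Finset.univ.filter fun a => f (Sum.inr a) = k).map Function.Embedding.inr := by
            ext x; cases x <;> simp
          rw [ITR, h0, Finset.card_map, Nat.card_eq_fintype_card, Fintype.card_subtype]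
        rw [hl, hr]
        exact Iff.rfl)
    refine Nat.card_congr (Equiv.trans ?_ (e1.trans (Equiv.subtypeProdEquivProd
      (p := fun f : Fin n → K => ∀ k, Nat.card {a // f a = k} = s k)
      (q := fun f : Fin n → K => ∀ k, Nat.card {a // f a = k} = s k))))
    refine Equiv.subtypeEquivRight fun f => forall_congr' fun k => ?_
    congr!
  rw [this, Nat.card_prod, ← ITaux_card_fun s hs]
  ring

noncomputable def ITphi {n : ℕ} {K : Type*} (s : K → ℕ)
    (p : Σ P : ITGood n s, {e : P.1.parts ≃ K // s ∘ e = fun B => ITL B.1}) : ITF n s :=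
  ⟨fun x => p.2.1 ⟨p.1.1.part x, by simp⟩, by
    classical
    obtain ⟨⟨P, hP, -⟩, e, he⟩ := p
    intro k
    have : (Finset.univ.filter fun x => e ⟨P.part x, by simp⟩ = k) = (e.symm k).1 := by
      ext x
      rw [Finset.mem_filter, ← P.part_eq_iff_mem (e.symm k).2, ← Equiv.eq_symm_apply,
        Subtype.ext_iff]
      simp
    have h2 : ITL (e.symm k).1 = s k := by
      have := congrFun he (e.symm k); simpa using this.symm
    have h3 := hP _ (e.symm k).2
    constructor
    · rw [← h2, ← this]
    · rw [← h2, h3, ← this]⟩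

lemma ITphi_inj {n : ℕ} {K : Type*} (s : K → ℕ) : Function.Injective (ITphi (n := n) s) := by
  rintro ⟨⟨P, hP⟩, e, he⟩ ⟨⟨Q, hQ⟩, e', he'⟩ h
  have h' : ∀ x, e ⟨P.part x, by simp⟩ = e' ⟨Q.part x, by simp⟩ := fun x =>
    congrFun (congrArg Subtype.val h) x
  have hpart : ∀ x, P.part x = Q.part x := by
    intro x
    ext y
    rw [P.mem_part_iff_part_eq_part (by simp) (by simp),
      Q.mem_part_iff_part_eq_part (by simp) (by simp)]
    have a1 : P.part y = P.part x ↔ e ⟨P.part y, by simp⟩ = e ⟨P.part x, by simp⟩ := by simp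
    have a2 : Q.part y = Q.part x ↔ e' ⟨Q.part y, by simp⟩ = e' ⟨Q.part x, by simp⟩ := by simp
    rw [a1, a2, h', h']
  have hPQ : P = Q := by
    ext B
    constructor
    · intro hB
      obtain ⟨x, hx⟩ := P.nonempty_of_mem_parts hB
      rw [← P.part_eq_of_mem hB hx, hpart]; simp
    · intro hB
      obtain ⟨x, hx⟩ := Q.nonempty_of_mem_parts hB
      rw [← Q.part_eq_of_mem hB hx, ← hpart]; simp
  subst hPQ
  have : e = e' := by
    ext ⟨B, hB⟩
    obtain ⟨x, hx⟩ := P.nonempty_of_mem_parts hB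
    have := h' x
    simp only [P.part_eq_of_mem hB hx] at this
    exact this
  subst this
  rfl

lemma ITphi_surj {n : ℕ} {K : Type*} (s : K → ℕ) (hs : ∀ k, 1 ≤ s k) :
    Function.Surjective (ITphi (n := n) s) := by
  classical
  rintro ⟨f, hf⟩
  let P : Finpartition (Finset.univ : Finset (Fin n ⊕ Fin n)) := Finpartition.ofSetoid (Setoid.ker f)
  let fib : K → Finset (Fin n ⊕ Fin n) := fun k => Finset.univ.filter fun x => f x = k
  have hf' : ∀ k, ITL (fib k) = s k ∧ ITR (fib k) = s k := by
    intro k; convert hf k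
  have hsurj : ∀ k, ∃ x, f x = k := by
    intro k
    have h1 : 0 < ITL (fib k) := by rw [(hf' k).1]; exact hs k
    obtain ⟨x, hx⟩ := Finset.card_pos.1 h1
    exact ⟨x, by simpa [fib] using (Finset.mem_filter.1 hx).1⟩
  have hpart : ∀ x, P.part x = fib (f x) := by
    intro x; ext y
    rw [Finpartition.mem_part_ofSetoid_iff_rel]
    simp [fib, eq_comm]
  have hmem : ∀ k, fib k ∈ P.parts := by
    intro k; obtain ⟨x, rfl⟩ := hsurj k
    rw [← hpart]; simp
  let E : K → P.parts := fun k => ⟨fib k, hmem k⟩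
  have hE : Function.Bijective E := by
    constructor
    · intro k l h
      obtain ⟨x, rfl⟩ := hsurj k
      have h1 : fib (f x) = fib l := congrArg Subtype.val h
      have h2 : x ∈ fib (f x) := by simp [fib]
      rw [h1] at h2
      simpa [fib] using h2
    · rintro ⟨B, hB⟩
      obtain ⟨x, hx⟩ := P.nonempty_of_mem_parts hB
      exact ⟨f x, Subtype.ext ((hpart x).symm.trans (P.part_eq_of_mem hB hx))⟩
  let e : K ≃ P.parts := Equiv.ofBijective E hE
  have hLe : ∀ k, ITL (e k).1 = s k := fun k => (hf' k).1
  have hRe : ∀ k, ITR (e k).1 = s k := fun k => (hf' k).2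
  refine ⟨⟨⟨P, ?_, ?_⟩, e.symm, ?_⟩, ?_⟩
  · intro B hB
    obtain ⟨k, hk⟩ := e.surjective ⟨B, hB⟩
    have h1 := hLe k
    have h2 := hRe k
    rw [hk] at h1 h2
    exact h1.trans h2.symm
  · intro i
    exact (Nat.card_congr (e.subtypeEquiv fun k => by rw [hLe])).symm
  · funext B
    have := hLe (e.symm B)
    simpa using this.symm
  · apply Subtype.ext
    funext x
    change e.symm _ = f x
    rw [Equiv.symm_apply_eq]
    exact Subtype.ext (hpart x)

lemma ITaux_main {n : ℕ} {K : Type*} [Fintype K] (s : K → ℕ) (hs : ∀ k, 1 ≤ s k)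
    (hsum : ∑ k, s k = n) (S : Finset ℕ) (hS : ∀ k, s k ∈ S) :
    Nat.card (ITGood n s) * ((∏ i ∈ S, (Nat.card {k // s k = i}).factorial) *
      (∏ k, (s k).factorial) ^ 2) = n.factorial ^ 2 := by
  classical
  haveI : Finite (ITGood n s) := by unfold ITGood; infer_instance
  cases nonempty_fintype (ITGood n s)
  rw [← ITaux_cardF s hsum, ← mul_assoc,
    ← Nat.card_congr (Equiv.ofBijective _ ⟨ITphi_inj (n := n) s, ITphi_surj s hs⟩), Nat.card_sigma]
  congr 1
  rw [Finset.sum_congr rfl (g := fun _ => ∏ i ∈ S, (Nat.card {k // s k = i}).factorial)]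
  · simp
  · intro P _
    exact ITaux_card_equiv_over (fun B : P.1.parts => ITL B.1) s P.2.2 S hS

/-- Proposition `comb`(c) of Kudryavtseva–Mazorchuk: the number of elements of `IT_n`
of type `(m_1, …, m_n)` (where `Σ i·m_i = n`), i.e. of partitions of `Fin n ⊕ Fin n`
each of whose blocks `B` satisfies `|B ∩ inl| = |B ∩ inr|` and such that for each
`i ∈ {1, …, n}` exactly `m_i` blocks have `|B ∩ inl| = i`, equals
`(n!)² / Π_{i=1}^n (m_i! (i!)^{2 m_i})`. -/
theorem card_IT_type (n : ℕ) (m : ℕ → ℕ) (hm : ∑ i ∈ Finset.Icc 1 n, i * m i = n) :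
    Nat.card {P : Finpartition (Finset.univ : Finset (Fin n ⊕ Fin n)) |
        (∀ B ∈ P.parts,
          (B.filter fun x => x.isLeft = true).card = (B.filter fun x => x.isRight = true).card) ∧
        (∀ i ∈ Finset.Icc 1 n,
          (P.parts.filter fun B => (B.filter fun x => x.isLeft = true).card = i).card = m i)} =
      n.factorial ^ 2 /
        ∏ i ∈ Finset.Icc 1 n, ((m i).factorial * i.factorial ^ (2 * m i)) := by
  classical
  let K := Σ i : ↥(Finset.Icc 1 n), Fin (m i)
  let s : K → ℕ := fun k => k.1.1
  have hs : ∀ k, 1 ≤ s k := fun k => (Finset.mem_Icc.1 k.1.2).1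
  have hsum : ∑ k, s k = n := by
    rw [Fintype.sum_sigma]
    simp only [s, Finset.sum_const, Finset.card_univ, Fintype.card_fin, smul_eq_mul]
    rw [Finset.sum_coe_sort (Finset.Icc 1 n) (fun i => m i * i)]
    simpa [mul_comm] using hm
  have hcard : ∀ i ∈ Finset.Icc 1 n, Nat.card {k // s k = i} = m i := by
    intro i hi
    have h1 : Nat.card {k // s k = i} = Nat.card {k : K // k.1 = ⟨i, hi⟩} :=
      Nat.card_congr (Equiv.subtypeEquivRight fun k => by rw [Subtype.ext_iff])
    rw [h1, Nat.card_congr (Equiv.sigmaSubtype (⟨i, hi⟩ : ↥(Finset.Icc 1 n)))]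
    simp
  have hmain := ITaux_main s hs hsum (Finset.Icc 1 n) (fun k => k.1.2)
  have hprod : (∏ i ∈ Finset.Icc 1 n, (Nat.card {k // s k = i}).factorial) *
      (∏ k, (s k).factorial) ^ 2 =
      ∏ i ∈ Finset.Icc 1 n, ((m i).factorial * i.factorial ^ (2 * m i)) := by
    rw [Finset.prod_mul_distrib]
    congr 1
    · exact Finset.prod_congr rfl fun i hi => by rw [hcard i hi]
    · rw [Fintype.prod_sigma]
      simp only [s, Finset.prod_const, Finset.card_univ, Fintype.card_fin]
      rw [Finset.prod_coe_sort (Finset.Icc 1 n) (fun i => i.factorial ^ m i), ← Finset.prod_pow]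
      exact Finset.prod_congr rfl fun i _ => by rw [← pow_mul, mul_comm]
  rw [hprod] at hmain
  rw [← hmain, Nat.mul_div_cancel _ (Finset.prod_pos fun i _ => by positivity)]
  refine Nat.card_congr (Equiv.subtypeEquivRight fun P => and_congr_right fun hP => ?_)
  have hpc : ∀ i, Nat.card {B : P.parts // ITL B.1 = i} =
      (P.parts.filter fun B => (B.filter fun x => x.isLeft = true).card = i).card := by
    intro i
    rw [Nat.card_congr (Equiv.subtypeSubtypeEquivSubtypeInter (fun B => B ∈ P.parts)
      (fun B => ITL B = i))]
    exact Nat.subtype_card _ fun B => by simp [ITL]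
  constructor
  · intro h i
    by_cases hi : i ∈ Finset.Icc 1 n
    · rw [hpc, h i hi, hcard i hi]
    · have h1 : IsEmpty {k // s k = i} := ⟨fun k => hi (k.2 ▸ k.1.1.2)⟩
      have h2 : IsEmpty {B : P.parts // ITL B.1 = i} := by
        refine ⟨fun ⟨⟨B, hB⟩, hBi⟩ => hi ?_⟩
        have hLR : ITL B = ITR B := hP B hB
        simp only at hBi
        rw [← hBi, Finset.mem_Icc]
        constructor
        · rw [Nat.one_le_iff_ne_zero]
          intro h0
          obtain ⟨x, hx⟩ := P.nonempty_of_mem_parts hB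
          have h0' := hLR ▸ h0
          rw [ITL, Finset.card_eq_zero] at h0
          rw [ITR, Finset.card_eq_zero] at h0'
          cases x with
          | inl a => exact Finset.filter_eq_empty_iff.1 h0 hx rfl
          | inr a => exact Finset.filter_eq_empty_iff.1 h0' hx rfl
        · calc ITL B ≤ (Finset.univ.map (Function.Embedding.inl : Fin n ↪ Fin n ⊕ Fin n)).card := by
                refine Finset.card_le_card ?_
                intro x hx
                cases x <;> simp at hx ⊢
            _ = n := by simp
      simp
  · intro h i hi
    rw [← hpc, h i, hcard i hi]
end

section
/- Let k, m, t be non-negative integers with 2k + 2m + t ≤ n. The number of partitions of Fin n ⊕ Fin n in which every block has cardinality 1 or 2, with exactly k+m blocks consisting of two left points, exactly k blocks consisting of two right points, and exactly t singleton blocks consisting of one left point, equals the number of such partitions with exactly k blocks of two left points, k+m blocks of two right points, and t singleton blocks of one right point, and both numbers equal (n!)² / (k!·2^k·(t+2m)!·(k+m)!·2^{k+m}·t!·(n−2k−2m−t)!) (an exact natural-number division). -/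
set_option linter.all false
namespace PBCount
open Finset

variable {n : ℕ}

abbrev G (n : ℕ) := Fin n ⊕ Fin n

def ty (B : Finset (G n)) : ℕ × ℕ := (B.toLeft.card, B.toRight.card)

open Classical in
noncomputable def X (s : Finset (G n)) (M : Multiset (ℕ × ℕ)) : Finset (Finset (Finset (G n))) :=
  Finset.univ.filter fun P => (P : Set (Finset (G n))).PairwiseDisjoint id ∧ P.sup id = s ∧
    ∅ ∉ P ∧ P.val.map ty = M

def D (I : Finset (ℕ × ℕ)) (M : Multiset (ℕ × ℕ)) : ℕ :=
  (M.map fun i => i.1.factorial * i.2.factorial).prod * ∏ i ∈ I, (M.count i).factorial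

lemma D_cons (I : Finset (ℕ × ℕ)) (M : Multiset (ℕ × ℕ)) (i : ℕ × ℕ) (hi : i ∈ I) :
    D I (i ::ₘ M) = (M.count i + 1) * (i.1.factorial * i.2.factorial) * D I M := by
  unfold D
  rw [Multiset.map_cons, Multiset.prod_cons, ← Finset.mul_prod_erase I _ hi,
    ← Finset.mul_prod_erase I (fun i => (M.count i).factorial) hi]
  have : ∏ x ∈ I.erase i, ((i ::ₘ M).count x).factorial
      = ∏ x ∈ I.erase i, (M.count x).factorial := by
    apply Finset.prod_congr rfl
    intro x hx
    rw [Multiset.count_cons_of_ne (Finset.ne_of_mem_erase hx)]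
  rw [this, Multiset.count_cons_self, Nat.factorial_succ]
  ring

lemma card_ty (s : Finset (G n)) (i : ℕ × ℕ) :
    (s.powerset.filter fun B => ty B = i).card
      = s.toLeft.card.choose i.1 * s.toRight.card.choose i.2 := by
  rw [← Finset.card_powersetCard, ← Finset.card_powersetCard, ← Finset.card_product]
  refine Finset.card_nbij' (fun B => (B.toLeft, B.toRight)) (fun p => p.1.disjSum p.2) ?_ ?_ ?_ ?_
  · intro B hB
    simp only [mem_coe, mem_filter, mem_powerset] at hB
    obtain ⟨hB, rfl⟩ := hB
    simp only [coe_product, Set.mem_prod, mem_coe, mem_powersetCard]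
    exact ⟨⟨Finset.toLeft_subset_toLeft hB, rfl⟩, ⟨Finset.toRight_subset_toRight hB, rfl⟩⟩
  · rintro ⟨a, b⟩ h
    simp only [coe_product, Set.mem_prod, mem_coe, mem_powersetCard] at h
    obtain ⟨⟨h1, h2⟩, ⟨h3, h4⟩⟩ := h
    simp only [mem_coe, mem_filter, mem_powerset]
    simp only [ty, toLeft_disjSum, toRight_disjSum,
      h2, h4, and_true]
    intro x hx
    rcases x with x | x
    · simp at hx; simpa using h1 hx
    · simp at hx; simpa using h3 hx
  · intro B _; exact Finset.toLeft_disjSum_toRight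
  · intro B _; simp

lemma step (s : Finset (G n)) (M : Multiset (ℕ × ℕ)) (i : ℕ × ℕ) (hi : i ≠ (0, 0)) :
    (X s (i ::ₘ M)).card * (M.count i + 1)
      = ∑ B ∈ s.powerset.filter (fun B => ty B = i), (X (s \ B) M).card := by
  have h1 : ∀ P ∈ X s (i ::ₘ M), (P.filter fun B => i = ty B).card = M.count i + 1 := by
    intro P hP
    simp only [X, mem_filter, mem_univ, true_and] at hP
    rw [← Multiset.count_cons_self, ← hP.2.2.2, Multiset.count_map]
    rfl
  rw [← smul_eq_mul, ← Finset.sum_const, ← Finset.sum_congr rfl h1, ← Finset.card_sigma,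
    ← Finset.card_sigma]
  refine Finset.card_nbij' (fun p => ⟨p.2, p.1.erase p.2⟩) (fun p => ⟨insert p.1 p.2, p.1⟩) ?_ ?_ ?_ ?_
  · rintro ⟨P, B⟩ h
    simp only [coe_sigma, Set.mem_sigma_iff, mem_coe, X, mem_filter, mem_univ, true_and,
      mem_powerset] at h ⊢
    obtain ⟨⟨hd, hs, he, hM⟩, hB, hBi⟩ := h
    refine ⟨⟨?_, hBi.symm⟩, ?_, ?_, ?_, ?_⟩
    · rw [← hs]; exact Finset.le_sup (f := id) hB
    · exact hd.subset (by simpa using Set.diff_subset)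
    · have hdj : Disjoint B ((P.erase B).sup id) := by
        rw [Finset.disjoint_sup_right]
        intro C hC
        exact hd hB (Finset.mem_of_mem_erase hC) (Finset.ne_of_mem_erase hC).symm
      have : P.sup id = B ∪ (P.erase B).sup id := by
        conv_lhs => rw [← Finset.insert_erase hB, Finset.sup_insert]
        rfl
      rw [← hs, this, Finset.union_sdiff_cancel_left hdj]
    · exact fun h => he (Finset.mem_of_mem_erase h)
    · have : P.val = B ::ₘ (P.erase B).val := by
        rw [Finset.erase_val, Multiset.cons_erase hB]
      rw [this, Multiset.map_cons, ← hBi] at hM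
      exact (Multiset.cons_inj_right i).1 hM
  · rintro ⟨B, Q⟩ h
    simp only [coe_sigma, Set.mem_sigma_iff, mem_coe, X, mem_filter, mem_univ, true_and,
      mem_powerset] at h ⊢
    obtain ⟨⟨hBs, hBi⟩, hd, hs, he, hM⟩ := h
    have hB0 : B ≠ ∅ := by rintro rfl; exact hi (by rw [← hBi]; rfl)
    have hC : ∀ C ∈ Q, Disjoint B C := by
      intro C hC
      have : C ⊆ s \ B := by rw [← hs]; exact Finset.le_sup (f := id) hC
      exact Finset.disjoint_of_subset_right this Finset.disjoint_sdiff
    have hBQ : B ∉ Q := fun h => hB0 (by simpa using hC B h)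
    refine ⟨⟨?_, ?_, ?_, ?_⟩, Finset.mem_insert_self _ _, hBi.symm⟩
    · rw [Finset.coe_insert]
      exact hd.insert fun C hc _ => hC C hc
    · rw [Finset.sup_insert, hs]; exact Finset.union_sdiff_of_subset hBs
    · simp [he, hB0.symm]
    · rw [Finset.insert_val_of_notMem hBQ, Multiset.map_cons, hM, hBi]
  · rintro ⟨P, B⟩ h
    simp only [coe_sigma, Set.mem_sigma_iff, mem_coe, mem_filter] at h
    simp [Finset.insert_erase h.2.1]
  · rintro ⟨B, Q⟩ h
    simp only [coe_sigma, Set.mem_sigma_iff, mem_coe, X, mem_filter, mem_univ, true_and,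
      mem_powerset] at h
    obtain ⟨⟨hBs, hBi⟩, hd, hs, he, hM⟩ := h
    have hB0 : B ≠ ∅ := by rintro rfl; exact hi (by rw [← hBi]; rfl)
    have hC : ∀ C ∈ Q, Disjoint B C := by
      intro C hC
      have : C ⊆ s \ B := by rw [← hs]; exact Finset.le_sup (f := id) hC
      exact Finset.disjoint_of_subset_right this Finset.disjoint_sdiff
    have hBQ : B ∉ Q := fun h => hB0 (by simpa using hC B h)
    simp [Finset.erase_insert hBQ]

lemma card_X (I : Finset (ℕ × ℕ)) (hI : (0, 0) ∉ I) (M : Multiset (ℕ × ℕ)) :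
    (∀ i ∈ M, i ∈ I) → ∀ s : Finset (G n), s.toLeft.card = (M.map Prod.fst).sum →
    s.toRight.card = (M.map Prod.snd).sum →
    (X s M).card * D I M = s.toLeft.card.factorial * s.toRight.card.factorial := by
  induction M using Multiset.induction with
  | empty =>
    intro _ s h1 h2
    simp only [Multiset.map_zero, Multiset.sum_zero] at h1 h2
    have hs : s = ∅ := by
      rw [← Finset.card_eq_zero, ← Finset.card_toLeft_add_card_toRight, h1, h2, Nat.add_zero]
    have : X s 0 = {∅} := by
      ext P
      simp only [X, mem_filter, mem_univ, true_and, Multiset.map_eq_zero, Finset.val_eq_zero,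
        mem_singleton]
      constructor
      · exact fun h => h.2.2.2
      · rintro rfl; simp [hs]
    rw [this, h1, h2]; simp [D]
  | cons i M ih =>
    intro hM s h1 h2
    have hiI : i ∈ I := hM i (Multiset.mem_cons_self _ _)
    have ih' := ih fun j hj => hM j (Multiset.mem_cons_of_mem hj)
    simp only [Multiset.map_cons, Multiset.sum_cons] at h1 h2
    have hst := step s M i (fun h => hI (h ▸ hiI))
    have hterm : ∀ B ∈ s.powerset.filter (fun B => ty B = i), (X (s \ B) M).card * D I M
        = (s.toLeft.card - i.1).factorial * (s.toRight.card - i.2).factorial := by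
      intro B hB
      simp only [mem_filter, mem_powerset] at hB
      obtain ⟨hB, rfl⟩ := hB
      have e1 : (s \ B).toLeft.card = s.toLeft.card - B.toLeft.card := by
        rw [Finset.toLeft_sdiff, Finset.card_sdiff_of_subset (Finset.toLeft_subset_toLeft hB)]
      have e2 : (s \ B).toRight.card = s.toRight.card - B.toRight.card := by
        rw [Finset.toRight_sdiff, Finset.card_sdiff_of_subset (Finset.toRight_subset_toRight hB)]
      rw [ih' (s \ B) (by rw [e1, h1]; simp [ty]) (by rw [e2, h2]; simp [ty]), e1, e2]
      rfl
    have hsum := Finset.sum_congr rfl hterm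
    rw [← Finset.sum_mul, ← hst, Finset.sum_const, card_ty, smul_eq_mul] at hsum
    rw [D_cons I M i hiI,
      ← Nat.choose_mul_factorial_mul_factorial (show i.1 ≤ s.toLeft.card by omega),
      ← Nat.choose_mul_factorial_mul_factorial (show i.2 ≤ s.toRight.card by omega)]
    calc _ = ((X s (i ::ₘ M)).card * (M.count i + 1) * D I M)
          * (i.1.factorial * i.2.factorial) := by ring
      _ = _ := by rw [hsum]; ring

def I5 : Finset (ℕ × ℕ) := {(2,0),(0,2),(1,0),(0,1),(1,1)}

def M5 (a b p q L : ℕ) : Multiset (ℕ × ℕ) :=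
  Multiset.replicate a (2,0) + Multiset.replicate b (0,2) + Multiset.replicate p (1,0) +
  Multiset.replicate q (0,1) + Multiset.replicate L (1,1)

lemma card_X5 (a b p q L : ℕ) (h1 : n = 2 * a + p + L) (h2 : n = 2 * b + q + L) :
    (X (univ : Finset (G n)) (M5 a b p q L)).card *
      (2 ^ a * 2 ^ b * (a.factorial * b.factorial * p.factorial * q.factorial * L.factorial))
      = n.factorial ^ 2 := by
  have hl : (univ : Finset (G n)).toLeft.card = n := by simp
  have hr : (univ : Finset (G n)).toRight.card = n := by simp
  have := card_X I5 (by decide) (M5 a b p q L) (by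
      intro i hi
      simp only [M5, Multiset.mem_add, Multiset.mem_replicate] at hi
      simp only [I5, mem_insert, mem_singleton]; tauto) (univ : Finset (G n))
    (by rw [hl]; simp [M5]; omega) (by rw [hr]; simp [M5]; omega)
  rw [hl, hr] at this
  rw [sq, ← this]
  congr 1
  simp [D, M5, I5, Multiset.count_replicate]
  ring

lemma card_parts (P : Finset (Finset (G n))) (i : ℕ × ℕ) (f : Finset (G n) → Prop)
    [DecidablePred f] (hf : ∀ B, f B ↔ i = ty B) :
    (P.filter f).card = (P.val.map ty).count i := by
  rw [Multiset.count_map]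
  simp only [hf]
  rfl

lemma tyL (B : Finset (G n)) : (∀ x ∈ B, x.isLeft = true) ↔ B.toRight.card = 0 := by
  rw [Finset.card_eq_zero, Finset.eq_empty_iff_forall_notMem]
  simp

lemma tyR (B : Finset (G n)) : (∀ x ∈ B, x.isRight = true) ↔ B.toLeft.card = 0 := by
  rw [Finset.card_eq_zero, Finset.eq_empty_iff_forall_notMem]
  simp

lemma M5_count (M : Multiset (ℕ × ℕ)) (hM : ∀ i ∈ M, i ∈ I5) :
    M = M5 (M.count (2,0)) (M.count (0,2)) (M.count (1,0)) (M.count (0,1)) (M.count (1,1)) := by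
  ext i
  by_cases hi : i ∈ I5
  · simp only [I5, mem_insert, mem_singleton] at hi
    rcases hi with rfl | rfl | rfl | rfl | rfl <;> simp [M5, Multiset.count_replicate]
  · rw [Multiset.count_eq_zero_of_notMem (fun h => hi (hM i h))]
    simp only [I5, mem_insert, mem_singleton, not_or] at hi
    simp [M5, Multiset.count_replicate, Ne.symm hi.1, Ne.symm hi.2.1, Ne.symm hi.2.2.1,
      Ne.symm hi.2.2.2.1, Ne.symm hi.2.2.2.2]

lemma sum_card_left (P : Finpartition (univ : Finset (G n))) :
    ((P.parts.val.map ty).map Prod.fst).sum = n ∧ ((P.parts.val.map ty).map Prod.snd).sum = n := by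
  have key : ∀ Q : Finset (Finset (G n)), (Q : Set (Finset (G n))).PairwiseDisjoint id →
      ((Q.val.map ty).map Prod.fst).sum = (Q.sup id).toLeft.card ∧
      ((Q.val.map ty).map Prod.snd).sum = (Q.sup id).toRight.card := by
    intro Q
    induction Q using Finset.induction_on with
    | empty => intro _; exact ⟨rfl, rfl⟩
    | insert B Q hB ih =>
      intro hd
      rw [Finset.coe_insert, Set.pairwiseDisjoint_insert_of_notMem (by simpa using hB)] at hd
      have hdj : Disjoint B (Q.sup id) := by
        rw [Finset.disjoint_sup_right]; exact fun C hC => hd.2 C hC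
      have e : (insert B Q).sup id = B ∪ Q.sup id := by rw [Finset.sup_insert]; rfl
      obtain ⟨i1, i2⟩ := ih hd.1
      rw [e, Finset.insert_val_of_notMem hB, Finset.toLeft_union, Finset.toRight_union,
        Finset.card_union_of_disjoint, Finset.card_union_of_disjoint]
      · simp only [Multiset.map_cons, Multiset.sum_cons, i1, i2]; simp [ty]
      · rw [Finset.disjoint_left] at hdj ⊢
        intro x hx hx'
        exact hdj (Finset.mem_toRight.1 hx) (Finset.mem_toRight.1 hx')
      · rw [Finset.disjoint_left] at hdj ⊢
        intro x hx hx'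
        exact hdj (Finset.mem_toLeft.1 hx) (Finset.mem_toLeft.1 hx')
  have := key P.parts P.supIndep.pairwiseDisjoint
  rw [P.sup_parts] at this
  simpa using this

lemma M5_counts (a b p q L : ℕ) : (M5 a b p q L).count (2,0) = a ∧ (M5 a b p q L).count (0,2) = b ∧
    (M5 a b p q L).count (1,0) = p ∧ (M5 a b p q L).count (0,1) = q ∧
    (M5 a b p q L).count (1,1) = L := by
  simp [M5, Multiset.count_replicate]

lemma mem_I5 (B : Finset (G n)) : ty B ∈ I5 ↔ B.card = 1 ∨ B.card = 2 := by
  rw [← Finset.card_toLeft_add_card_toRight]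
  simp only [I5, ty, mem_insert, mem_singleton, Prod.mk.injEq]
  omega

lemma card_eq_X (M : Multiset (ℕ × ℕ)) (S : Set (Finpartition (univ : Finset (G n))))
    (hS : ∀ P, P ∈ S ↔ P.parts.val.map ty = M) :
    Nat.card S = (X (univ : Finset (G n)) M).card := by
  rw [← Nat.card_eq_finsetCard]
  refine Nat.card_congr (Equiv.ofBijective
    (fun P => ⟨P.1.parts, ?_⟩) ⟨?_, ?_⟩)
  · simp only [X, mem_filter, mem_univ, true_and]
    exact ⟨P.1.supIndep.pairwiseDisjoint, P.1.sup_parts, P.1.bot_notMem, (hS _).1 P.2⟩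
  · rintro ⟨P, hP⟩ ⟨Q, hQ⟩ h
    simp only [Subtype.mk.injEq] at h ⊢
    exact Finpartition.ext h
  · rintro ⟨P, hP⟩
    have hP' := hP
    simp only [X, mem_filter, mem_univ, true_and] at hP'
    obtain ⟨hd, hs, he, hM⟩ := hP'
    exact ⟨⟨⟨P, Finset.supIndep_iff_pairwiseDisjoint.2 hd, hs, he⟩, (hS _).2 hM⟩, rfl⟩

lemma iff_M5 (P : Finpartition (univ : Finset (G n))) (a b p q L : ℕ)
    (h1 : n = 2 * a + p + L) (h2 : n = 2 * b + q + L) :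
    P.parts.val.map ty = M5 a b p q L ↔ (∀ B ∈ P.parts, B.card = 1 ∨ B.card = 2) ∧
      (P.parts.val.map ty).count (2,0) = a ∧ (P.parts.val.map ty).count (0,2) = b ∧
      ((P.parts.val.map ty).count (1,0) = p ∨ (P.parts.val.map ty).count (0,1) = q) := by
  constructor
  · intro h
    refine ⟨?_, ?_⟩
    · intro B hB
      rw [← mem_I5]
      have : ty B ∈ P.parts.val.map ty := Multiset.mem_map_of_mem _ hB
      rw [h] at this
      simp only [M5, Multiset.mem_add, Multiset.mem_replicate] at this
      simp only [I5, mem_insert, mem_singleton]; tauto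
    · obtain ⟨c1, c2, c3, c4, c5⟩ := M5_counts a b p q L
      rw [h]; exact ⟨c1, c2, Or.inl c3⟩
  · rintro ⟨h, c1, c2, c3⟩
    obtain ⟨s1, s2⟩ := sum_card_left P
    have hM := M5_count (P.parts.val.map ty) (by
      intro i hi
      obtain ⟨B, hB, rfl⟩ := Multiset.mem_map.1 hi
      exact (mem_I5 B).2 (h B hB))
    generalize P.parts.val.map ty = M at *
    rw [hM] at s1 s2
    simp only [M5, Multiset.map_add, Multiset.sum_add, Multiset.map_replicate,
      Multiset.sum_replicate, smul_eq_mul] at s1 s2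
    have e3 : M.count (1,0) = p := by omega
    have e4 : M.count (0,1) = q := by omega
    have e5 : M.count (1,1) = L := by omega
    rw [c1, c2, e3, e4, e5] at hM
    exact hM

lemma f20 (P : Finset (Finset (G n))) :
    (P.filter fun B => B.card = 2 ∧ ∀ x ∈ B, x.isLeft = true).card = (P.val.map ty).count (2,0) := by
  apply card_parts
  intro B
  rw [tyL, ← Finset.card_toLeft_add_card_toRight]; simp only [ty, Prod.mk.injEq]; omega

lemma f02 (P : Finset (Finset (G n))) :
    (P.filter fun B => B.card = 2 ∧ ∀ x ∈ B, x.isRight = true).card = (P.val.map ty).count (0,2) := by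
  apply card_parts
  intro B
  rw [tyR, ← Finset.card_toLeft_add_card_toRight]; simp only [ty, Prod.mk.injEq]; omega

lemma f10 (P : Finset (Finset (G n))) :
    (P.filter fun B => B.card = 1 ∧ ∀ x ∈ B, x.isLeft = true).card = (P.val.map ty).count (1,0) := by
  apply card_parts
  intro B
  rw [tyL, ← Finset.card_toLeft_add_card_toRight]; simp only [ty, Prod.mk.injEq]; omega

lemma f01 (P : Finset (Finset (G n))) :
    (P.filter fun B => B.card = 1 ∧ ∀ x ∈ B, x.isRight = true).card = (P.val.map ty).count (0,1) := by
  apply card_parts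
  intro B
  rw [tyR, ← Finset.card_toLeft_add_card_toRight]; simp only [ty, Prod.mk.injEq]; omega

end PBCount

/-- Proposition `comb`(d) of Kudryavtseva–Mazorchuk: for non-negative integers `k, m, t`
with `2k + 2m + t ≤ n`, the number of elements of the partial Brauer monoid `P𝔅_n`
(partitions of `Fin n ⊕ Fin n` into blocks of size `1` or `2`) of type `(k, m, 0, t)`
— with exactly `k + m` blocks of two left points, `k` blocks of two right points and
`t` singleton blocks of a left point — equals the number of those of type `(k, 0, m, t)`
— with exactly `k` blocks of two left points, `k + m` blocks of two right points and
`t` singleton blocks of a right point — and both numbers equal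
`(n!)² / (k! 2^k (t+2m)! (k+m)! 2^{k+m} t! (n-2k-2m-t)!)`. -/
theorem card_PB_type (n k m t : ℕ) (h : 2 * k + 2 * m + t ≤ n) :
    Nat.card {P : Finpartition (Finset.univ : Finset (Fin n ⊕ Fin n)) |
        (∀ B ∈ P.parts, B.card = 1 ∨ B.card = 2) ∧
        (P.parts.filter fun B => B.card = 2 ∧ ∀ x ∈ B, x.isLeft = true).card = k + m ∧
        (P.parts.filter fun B => B.card = 2 ∧ ∀ x ∈ B, x.isRight = true).card = k ∧
        (P.parts.filter fun B => B.card = 1 ∧ ∀ x ∈ B, x.isLeft = true).card = t} =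
      Nat.card {P : Finpartition (Finset.univ : Finset (Fin n ⊕ Fin n)) |
        (∀ B ∈ P.parts, B.card = 1 ∨ B.card = 2) ∧
        (P.parts.filter fun B => B.card = 2 ∧ ∀ x ∈ B, x.isLeft = true).card = k ∧
        (P.parts.filter fun B => B.card = 2 ∧ ∀ x ∈ B, x.isRight = true).card = k + m ∧
        (P.parts.filter fun B => B.card = 1 ∧ ∀ x ∈ B, x.isRight = true).card = t} ∧
    Nat.card {P : Finpartition (Finset.univ : Finset (Fin n ⊕ Fin n)) |
        (∀ B ∈ P.parts, B.card = 1 ∨ B.card = 2) ∧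
        (P.parts.filter fun B => B.card = 2 ∧ ∀ x ∈ B, x.isLeft = true).card = k + m ∧
        (P.parts.filter fun B => B.card = 2 ∧ ∀ x ∈ B, x.isRight = true).card = k ∧
        (P.parts.filter fun B => B.card = 1 ∧ ∀ x ∈ B, x.isLeft = true).card = t} =
      n.factorial ^ 2 /
        (k.factorial * 2 ^ k * (t + 2 * m).factorial * (k + m).factorial * 2 ^ (k + m) *
          t.factorial * (n - 2 * k - 2 * m - t).factorial) := by
  obtain ⟨L, rfl⟩ : ∃ L, n = 2 * k + 2 * m + t + L := ⟨_, (Nat.add_sub_cancel' h).symm⟩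
  have hL : 2 * k + 2 * m + t + L - 2 * k - 2 * m - t = L := by omega
  rw [hL]
  have A := PBCount.card_X5 (n := 2 * k + 2 * m + t + L) (k + m) k t (t + 2 * m) L
    (by ring) (by ring)
  have B := PBCount.card_X5 (n := 2 * k + 2 * m + t + L) k (k + m) (t + 2 * m) t L
    (by ring) (by ring)
  rw [PBCount.card_eq_X (PBCount.M5 (k + m) k t (t + 2 * m) L), 
    PBCount.card_eq_X (PBCount.M5 k (k + m) (t + 2 * m) t L)]
  · constructor
    · refine Nat.eq_of_mul_eq_mul_right (?_ : 0 < 2 ^ (k + m) * 2 ^ k * ((k + m).factorial *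
        k.factorial * t.factorial * (t + 2 * m).factorial * L.factorial)) ?_
      · positivity
      · rw [A, ← B]; ring
    · symm
      apply Nat.div_eq_of_eq_mul_left
      · positivity
      · rw [← A]; ring
  · intro P
    rw [PBCount.iff_M5 P _ _ _ _ _ (by ring) (by ring), Set.mem_setOf_eq, PBCount.f20,
      PBCount.f02, PBCount.f01]
    refine and_congr_right fun hc => and_congr_right fun h1 => and_congr_right fun h2 => ?_
    refine ⟨Or.inr, ?_⟩
    intro h3
    have h4 := (PBCount.iff_M5 P k (k + m) (t + 2 * m) t L (by ring) (by ring)).2 ⟨hc, h1, h2, h3⟩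
    rw [h4]
    exact (PBCount.M5_counts _ _ _ _ _).2.2.2.1
  · intro P
    rw [PBCount.iff_M5 P _ _ _ _ _ (by ring) (by ring), Set.mem_setOf_eq, PBCount.f20,
      PBCount.f02, PBCount.f10]
    refine and_congr_right fun hc => and_congr_right fun h1 => and_congr_right fun h2 => ?_
    refine ⟨Or.inl, ?_⟩
    intro h3
    have h4 := (PBCount.iff_M5 P (k + m) k t (t + 2 * m) L (by ring) (by ring)).2 ⟨hc, h1, h2, h3⟩
    rw [h4]
    exact (PBCount.M5_counts _ _ _ _ _).2.2.1
end
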